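/- arXiv:2301.00432 — 3 statements merged into one kernel-verified Lean document; each statement's English description precedes it below -/
import Mathlib

section
/- Let d, m be integers with 1 ≤ m ≤ d, and let β be a modulus of continuity. There exists a continuous function f̃ : [0,1]^d → ℝ^m admitting β as a modulus of continuity such that for every ε with 0 < ε < (1/(2√m)) · β(2^{−5}), N^{f̃}_{{0}}(ε) ≥ (16 / Ψ_β(2√m · ε))^m · 2^{−4m·√(|log₂ Ψ_β(2√m · ε)|)}, where 0 denotes the origin in ℝ^m. -/
open MeasureTheory ENNReal

noncomputable section

/-- The closed unit cube `[0,1]^d` in `ℝ^d`. -/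
def unitCube (d : ℕ) : Set (EuclideanSpace ℝ (Fin d)) :=
  {x | ∀ i, x i ∈ Set.Icc (0 : ℝ) 1}

/-- `N^f_W(ε)`: the infimum of the `sdim`-dimensional Hausdorff measure of
`Z^h_W = {x ∈ [0,1]^d : h x ∈ W}` over all continuous `h` with `‖h - f‖_{C⁰} ≤ ε`. -/
def NW (d m : ℕ) (sdim : ℝ) (W : Set (EuclideanSpace ℝ (Fin m)))
    (f : EuclideanSpace ℝ (Fin d) → EuclideanSpace ℝ (Fin m)) (ε : ℝ) : ℝ≥0∞ :=
  ⨅ (h : EuclideanSpace ℝ (Fin d) → EuclideanSpace ℝ (Fin m))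
    (_ : ContinuousOn h (unitCube d))
    (_ : ∀ x ∈ unitCube d, dist (h x) (f x) ≤ ε),
    μH[sdim] {x ∈ unitCube d | h x ∈ W}

/-- `β : [0,∞) → [0,∞)` is a modulus of continuity: increasing, subadditive,
`β 0 = 0` and `β(δ) → 0` as `δ → 0+`. -/
def IsModulus (β : ℝ → ℝ) : Prop :=
  (∀ s, 0 ≤ s → 0 ≤ β s) ∧
  MonotoneOn β (Set.Ici 0) ∧
  (∀ s t : ℝ, 0 ≤ s → 0 ≤ t → β (s + t) ≤ β s + β t) ∧
  β 0 = 0 ∧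
  Filter.Tendsto β (nhdsWithin 0 (Set.Ioi 0)) (nhds 0)

/-- `Ψ_β(s) = sup {δ ≥ 0 : β δ ≤ s}`. -/
def Psi (β : ℝ → ℝ) (s : ℝ) : ℝ :=
  sSup {δ : ℝ | 0 ≤ δ ∧ β δ ≤ s}


lemma det_poly {m : ℕ} (A : EuclideanSpace ℝ (Fin m) →L[ℝ] EuclideanSpace ℝ (Fin m)) :
    ∃ p : Polynomial ℝ, p.natDegree ≤ m ∧ ∀ t : ℝ, p.eval t =
      ((ContinuousLinearMap.id ℝ _ + t • A : EuclideanSpace ℝ (Fin m) →L[ℝ] EuclideanSpace ℝ (Fin m))).det := by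
  set b := (EuclideanSpace.basisFun (Fin m) ℝ).toBasis
  set M := LinearMap.toMatrix b b (A : EuclideanSpace ℝ (Fin m) →ₗ[ℝ] EuclideanSpace ℝ (Fin m))
  refine ⟨_, (Polynomial.natDegree_det_X_add_C_le M 1).trans (by simp), fun t => ?_⟩
  have h1 : ((ContinuousLinearMap.id ℝ _ + t • A : EuclideanSpace ℝ (Fin m) →L[ℝ] EuclideanSpace ℝ (Fin m))).det = (t • M + 1).det := by
    rw [ContinuousLinearMap.det, ← LinearMap.det_toMatrix b]
    congr 1
    rw [ContinuousLinearMap.toLinearMap_add, ContinuousLinearMap.toLinearMap_smul, map_add, map_smul, add_comm]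
    congr 1
    exact LinearMap.toMatrix_id b
  rw [h1, ← Polynomial.coe_evalRingHom, RingHom.map_det]
  congr 1
  ext i j
  by_cases h : i = j <;> simp [h] <;> ring

lemma det_pos_small {m : ℕ} (A : EuclideanSpace ℝ (Fin m) →L[ℝ] EuclideanSpace ℝ (Fin m))
    (K t : ℝ) (hA : ‖A‖ ≤ K) (ht : 0 ≤ t) (htK : t * K < 1) :
    0 < ((ContinuousLinearMap.id ℝ _ + t • A : EuclideanSpace ℝ (Fin m) →L[ℝ] EuclideanSpace ℝ (Fin m))).det := by
  obtain ⟨p, -, hp⟩ := det_poly A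
  have hK : 0 ≤ K := (norm_nonneg _).trans hA
  have hne : ∀ s ∈ Set.Icc 0 t, p.eval s ≠ 0 := by
    intro s hs h0
    rw [hp] at h0
    have := LinearMap.bot_lt_ker_of_det_eq_zero h0
    obtain ⟨v, hv, hv0⟩ := (Submodule.ne_bot_iff _).1 this.ne'
    have hv' : v + s • A v = 0 := by simpa using hv
    have h3 : ‖v‖ = s * ‖A v‖ := by
      have h3' := congrArg norm (eq_neg_of_add_eq_zero_left hv')
      rwa [norm_neg, norm_smul, Real.norm_of_nonneg hs.1] at h3'
    have h4 : ‖A v‖ ≤ K * ‖v‖ := A.le_of_opNorm_le hA v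
    have h5 : 0 < ‖v‖ := norm_pos_iff.2 hv0
    have h6 : s * ‖A v‖ ≤ t * (K * ‖v‖) := by
      apply mul_le_mul hs.2 h4 (norm_nonneg _) ht
    nlinarith
  rw [← hp]
  by_contra hc
  push Not at hc
  have h0 : p.eval 0 = 1 := by rw [hp]; simp [ContinuousLinearMap.det]
  have := intermediate_value_Icc' ht (p.continuous.continuousOn (s := Set.Icc 0 t))
  obtain ⟨s, hs, hs0⟩ := this ⟨hc, by rw [h0]; norm_num⟩
  exact hne s hs hs0

lemma no_retraction {m : ℕ} (R : ℝ) (hR : 0 < R)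
    (r : EuclideanSpace ℝ (Fin m) → EuclideanSpace ℝ (Fin m)) (hr : ContDiff ℝ 1 r)
    (hS : ∀ x, ‖x‖ = R → r x = x) (hn : ∀ x, ‖r x‖ = R) : False := by
  let E := EuclideanSpace ℝ (Fin m)
  set B := Metric.closedBall (0 : E) R with hB
  have hBm : ∀ x, x ∈ B ↔ ‖x‖ ≤ R := fun x => by simp [hB]
  set w : E → E := fun x => r x - x with hw
  have hwC : ContDiff ℝ 1 w := hr.sub contDiff_id
  have hwd : Differentiable ℝ w := hwC.differentiable (by norm_num)
  have hwc : Continuous (fderiv ℝ w) := hwC.continuous_fderiv (by norm_num)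
  have hBc : IsCompact B := isCompact_closedBall _ _
  obtain ⟨K, hK⟩ := hBc.exists_bound_of_continuousOn hwc.continuousOn
  have hK0 : 0 ≤ K := (norm_nonneg _).trans (hK 0 ((hBm 0).2 (by simpa using hR.le)))
  have hLB : ∀ x ∈ B, ∀ y ∈ B, ‖w y - w x‖ ≤ K * ‖y - x‖ := fun x hx y hy =>
    (convex_closedBall (0:E) R).norm_image_sub_le_of_norm_fderiv_le (fun z _ => hwd z) hK hx hy
  have hw0 : ∀ x, ‖x‖ = R → w x = 0 := fun x hx => by simp [hw, hS x hx]
  classical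
  set u : E → E := fun x => if ‖x‖ ≤ R then w x else 0 with hu
  have hcross : ∀ x y, ‖x‖ ≤ R → ¬ ‖y‖ ≤ R → ‖u y - u x‖ ≤ K * ‖y - x‖ := by
    intro x y hx hy
    push Not at hy
    have hc : Continuous fun s : ℝ => ‖x + s • (y - x)‖ := by fun_prop
    obtain ⟨s, hs, hs1⟩ := intermediate_value_Icc (zero_le_one) hc.continuousOn
      (show R ∈ Set.Icc _ _ from ⟨by simpa using hx, by simpa using hy.le⟩)
    have h1 := hLB x ((hBm x).2 hx) (x + s • (y - x)) ((hBm _).2 hs1.le)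
    rw [hw0 _ hs1] at h1
    simp only [hu, hx, not_le.2 hy, if_true, if_false]
    refine h1.trans ?_
    rw [add_sub_cancel_left, norm_smul, Real.norm_of_nonneg hs.1]
    have := mul_nonneg hK0 (norm_nonneg (y - x))
    nlinarith [hs.2]
  have hL : ∀ x y, ‖u x - u y‖ ≤ K * ‖x - y‖ := by
    intro x y
    by_cases hx : ‖x‖ ≤ R <;> by_cases hy : ‖y‖ ≤ R
    · simpa [hu, hx, hy] using hLB y ((hBm y).2 hy) x ((hBm x).2 hx)
    · rw [norm_sub_rev, norm_sub_rev x]; exact hcross x y hx hy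
    · exact hcross y x hy hx
    · simpa [hu, hx, hy] using mul_nonneg hK0 (norm_nonneg (x - y))
  have key : ∀ t : ℝ, 0 ≤ t → t ≤ 1 → t * K < 1 →
      ∫ x in B, (ContinuousLinearMap.id ℝ E + t • fderiv ℝ w x).det = (volume : Measure E).real B := by
    intro t ht ht1 htK
    have hinj : Function.Injective (fun x => x + t • u x) := by
      intro x y hxy
      have h1 : x - y = - (t • (u x - u y)) := by
        rw [smul_sub]
        have : x + t • u x = y + t • u y := hxy
        rw [neg_sub, sub_eq_sub_iff_add_eq_add, this, add_comm]
      have h2 : ‖x - y‖ = t * ‖u x - u y‖ := by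
        rw [h1, norm_neg, norm_smul, Real.norm_of_nonneg ht]
      by_contra hne
      have h3 : 0 < ‖x - y‖ := norm_pos_iff.2 (sub_ne_zero.2 hne)
      nlinarith [mul_le_mul_of_nonneg_left (hL x y) ht]
    have hsurj : Function.Surjective (fun x => x + t • u x) := by
      intro y
      have hcon : ContractingWith (Real.toNNReal (t * K)) (fun x => y - t • u x) := by
        refine ⟨by rw [← NNReal.coe_lt_coe]; simpa [Real.coe_toNNReal _ (mul_nonneg ht hK0)] using htK, ?_⟩
        refine LipschitzWith.of_dist_le_mul fun a b => ?_
        rw [Real.coe_toNNReal _ (mul_nonneg ht hK0), dist_eq_norm, dist_eq_norm, _root_.sub_sub_sub_cancel_left,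
          ← smul_sub, norm_smul, Real.norm_of_nonneg ht, norm_sub_rev a b, mul_assoc]
        exact mul_le_mul_of_nonneg_left (hL b a) ht
      refine ⟨hcon.fixedPoint, ?_⟩
      have := hcon.fixedPoint_isFixedPt
      have h2 : y - t • u hcon.fixedPoint = hcon.fixedPoint := this
      show hcon.fixedPoint + t • u hcon.fixedPoint = y
      nth_rewrite 1 [← h2]
      simp
    have heq : ∀ x ∈ B, x + t • w x = x + t • u x := by
      intro x hx
      simp [hu, (hBm x).1 hx]
    have himg : (fun x => x + t • w x) '' B = B := by
      ext y
      constructor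
      · rintro ⟨x, hx, rfl⟩
        rw [hBm] at hx ⊢
        have : x + t • w x = (1 - t) • x + t • r x := by simp only [hw]; module
        show ‖x + t • w x‖ ≤ R
        rw [this]
        refine (norm_add_le _ _).trans ?_
        rw [norm_smul, norm_smul, hn, Real.norm_of_nonneg ht, Real.norm_of_nonneg (by linarith)]
        nlinarith
      · intro hy
        obtain ⟨x, hx⟩ := hsurj y
        by_cases hxB : x ∈ B
        · exact ⟨x, hxB, by rw [← hx]; exact heq x hxB⟩
        · exfalso
          rw [hBm] at hxB
          have : u x = 0 := by simp [hu, hxB]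
          simp only [this, smul_zero, add_zero] at hx
          rw [← hx, hBm] at hy
          exact hxB hy
    have hcv := integral_image_eq_integral_abs_det_fderiv_smul (volume : Measure E) hBc.measurableSet
      (f := fun x => x + t • w x) (f' := fun x => ContinuousLinearMap.id ℝ E + t • fderiv ℝ w x)
      (fun x _ => ((hasFDerivAt_id x).add ((hwd x).hasFDerivAt.const_smul t)).hasFDerivWithinAt)
      (by
        intro x hx y hy hxy
        apply hinj
        show x + t • u x = y + t • u y
        rw [← heq x hx, ← heq y hy]
        exact hxy) (fun _ => (1 : ℝ))
    rw [himg] at hcv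
    rw [integral_const] at hcv
    simp only [smul_eq_mul, mul_one, measureReal_restrict_apply_univ] at hcv
    rw [hcv]
    refine setIntegral_congr_fun hBc.measurableSet fun x hx => ?_
    exact (abs_of_pos (det_pos_small _ K t (hK x hx) ht htK)).symm
  -- interpolation
  set τ : ℝ := 1 / (K + 1) with hτ
  have hτ0 : 0 < τ := by positivity
  set v : ℕ → ℝ := fun i => τ / (i + 1) with hv
  have hv0 : ∀ i, 0 < v i := fun i => by positivity
  have hvτ : ∀ i, v i ≤ τ := fun i => div_le_self hτ0.le (by linarith [Nat.cast_nonneg (α := ℝ) i])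
  have hτ1 : τ ≤ 1 := by rw [hτ, div_le_one (by linarith)]; linarith
  have hτK : τ * K < 1 := by rw [hτ, div_mul_eq_mul_div, div_lt_one (by linarith)]; linarith
  have hvinj : Set.InjOn v (Finset.range (m + 1)) := by
    intro i _ j _ hij
    simp only [hv] at hij
    rw [div_eq_div_iff (by positivity) (by positivity)] at hij
    have := mul_left_cancel₀ hτ0.ne' hij
    have : (j : ℝ) = i := by linarith
    exact_mod_cast this.symm
  have hpoint : ∀ x, (ContinuousLinearMap.id ℝ E + (1 : ℝ) • fderiv ℝ w x).det =
      ∑ i ∈ Finset.range (m + 1), (ContinuousLinearMap.id ℝ E + v i • fderiv ℝ w x).det *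
        (Lagrange.basis (Finset.range (m + 1)) v i).eval 1 := by
    intro x
    obtain ⟨p, hpd, hp⟩ := det_poly (fderiv ℝ w x)
    have hdeg : p.degree < (Finset.range (m + 1)).card := by
      rw [Finset.card_range]
      refine Polynomial.degree_le_natDegree.trans_lt ?_
      exact_mod_cast Nat.lt_succ_of_le hpd
    have := Lagrange.eq_interpolate hvinj hdeg
    rw [← hp, this, Lagrange.interpolate_apply, Polynomial.eval_finsetSum]
    refine Finset.sum_congr rfl fun i _ => ?_
    rw [Polynomial.eval_mul, Polynomial.eval_C, hp]
  have hcont : ∀ t : ℝ, Continuous fun x => (ContinuousLinearMap.id ℝ E + t • fderiv ℝ w x).det := fun t =>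
    ContinuousLinearMap.continuous_det.comp (by fun_prop)
  have hdet0 : ∀ x, (ContinuousLinearMap.id ℝ E + (1 : ℝ) • fderiv ℝ w x).det = 0 := by
    intro x
    have hrd : DifferentiableAt ℝ r x := hr.differentiable (by norm_num) x
    have h1 : ContinuousLinearMap.id ℝ E + (1 : ℝ) • fderiv ℝ w x = fderiv ℝ r x := by
      have : fderiv ℝ w x = fderiv ℝ r x - ContinuousLinearMap.id ℝ E := by
        rw [hw, fderiv_fun_sub hrd differentiableAt_fun_id]; simp; rfl
      rw [this]; simp
    rw [h1]
    by_contra hne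
    have hsurj := (LinearMap.equivOfDetNeZero (fderiv ℝ r x : E →ₗ[ℝ] E) hne).surjective
    obtain ⟨z, hz⟩ := hsurj (r x)
    have hz' : fderiv ℝ r x z = r x := hz
    have h2 : HasFDerivAt (fun y => inner ℝ (r y) (r y)) _ x := hrd.hasFDerivAt.inner ℝ hrd.hasFDerivAt
    have h3 : HasFDerivAt (fun y => inner ℝ (r y) (r y)) (0 : E →L[ℝ] ℝ) x := by
      have : (fun y => inner ℝ (r y) (r y)) = fun _ => R ^ 2 := by
        funext y; rw [real_inner_self_eq_norm_sq, hn]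
      rw [this]; exact hasFDerivAt_const _ _
    have h4 := congrArg (fun L : E →L[ℝ] ℝ => L z) (h2.unique h3)
    simp [hz', hn, hR.ne'] at h4
  have hfin : (0 : ℝ) = (volume : Measure E).real B := by
    calc (0 : ℝ) = ∫ x in B, (ContinuousLinearMap.id ℝ E + (1 : ℝ) • fderiv ℝ w x).det := by simp only [hdet0, integral_zero]
      _ = ∑ i ∈ Finset.range (m + 1), (volume : Measure E).real B *
        (Lagrange.basis (Finset.range (m + 1)) v i).eval 1 := by
        simp_rw [hpoint]
        rw [integral_finsetSum]
        · refine Finset.sum_congr rfl fun i _ => ?_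
          rw [integral_mul_const, key (v i) (hv0 i).le ((hvτ i).trans hτ1)
            ((mul_le_mul_of_nonneg_right (hvτ i) hK0).trans_lt hτK)]
        · intro i _
          exact (((hcont (v i)).mul continuous_const).continuousOn).integrableOn_compact hBc
      _ = (volume : Measure E).real B := by
        rw [← Finset.mul_sum, ← Polynomial.eval_finsetSum, Lagrange.sum_basis hvinj (by simp)]
        simp
  have hpos : 0 < (volume : Measure E).real B :=
    ENNReal.toReal_pos (Metric.measure_closedBall_pos _ _ hR).ne' hBc.measure_lt_top.ne
  linarith

lemma fixed_pt {m : ℕ} (g : EuclideanSpace ℝ (Fin m) → EuclideanSpace ℝ (Fin m))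
    (hg : Continuous g) (C : ℝ) (hC : ∀ x, ‖g x‖ ≤ C) : ∃ x, g x = x := by
  by_contra hno
  push Not at hno
  have hC0 : 0 ≤ C := (norm_nonneg _).trans (hC 0)
  obtain ⟨g', hg', happ, -⟩ := hg.exists_contDiff_approx 1
    (ε := fun x => min (1 / 2) (‖x - g x‖)) (by fun_prop)
    (fun x => lt_min (by norm_num) (norm_pos_iff.2 (sub_ne_zero.2 (hno x).symm)))
  let χ : ContDiffBump (0 : EuclideanSpace ℝ (Fin m)) := ⟨C + 1, C + 2, by linarith, by linarith⟩
  set F : EuclideanSpace ℝ (Fin m) → EuclideanSpace ℝ (Fin m) := fun x => x - χ x • g' x with hF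
  have hFc : ContDiff ℝ 1 F := contDiff_id.sub (χ.contDiff.smul hg')
  have hF0 : ∀ x, F x ≠ 0 := by
    intro x hx
    have hx' : x = χ x • g' x := sub_eq_zero.1 hx
    have h1 := happ x
    rw [lt_min_iff, dist_eq_norm] at h1
    have h2 : ‖g' x‖ ≤ C + 1 / 2 := by
      have : ‖g' x‖ ≤ ‖g' x - g x‖ + ‖g x‖ := by
        simpa using norm_add_le (g' x - g x) (g x)
      linarith [hC x, h1.1]
    have h3 : ‖x‖ ≤ C + 1 := by
      have h4 := congrArg norm hx'
      rw [norm_smul, Real.norm_of_nonneg χ.nonneg] at h4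
      nlinarith [χ.le_one (x := x), norm_nonneg (g' x), χ.nonneg (x := x)]
    have h5 : χ x = 1 := χ.one_of_mem_closedBall (by simpa using h3)
    rw [h5, one_smul] at hx'
    have := h1.2
    rw [← hx'] at this
    exact lt_irrefl _ this
  refine no_retraction (m := m) (C + 2) (by linarith) (fun x => ((C + 2) / ‖F x‖) • F x) ?_ ?_ ?_
  · exact (contDiff_const.div (hFc.norm ℝ hF0) (fun x => norm_ne_zero_iff.2 (hF0 x))).smul hFc
  · intro x hx
    have h5 : χ x = 0 := χ.zero_of_le_dist (by simp [hx, χ])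
    have h6 : F x = x := by simp [hF, h5]
    simp only [h6, hx]
    rw [div_self (by linarith), one_smul]
  · intro x
    have := norm_ne_zero_iff.2 (hF0 x)
    rw [norm_smul, norm_div, norm_norm, div_mul_cancel₀ _ this, Real.norm_of_nonneg (by linarith)]

lemma pm {m : ℕ} (a b : Fin m → ℝ) (hab : ∀ i, a i < b i) (h : (Fin m → ℝ) → (Fin m → ℝ))
    (hc : ContinuousOn h (Set.Icc a b))
    (ha : ∀ x ∈ Set.Icc a b, ∀ i, x i = a i → h x i ≤ 0)
    (hb : ∀ x ∈ Set.Icc a b, ∀ i, x i = b i → 0 ≤ h x i) :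
    ∃ x ∈ Set.Icc a b, h x = 0 := by
  set P : (Fin m → ℝ) → (Fin m → ℝ) := fun x i => max (a i) (min (b i) (x i)) with hP
  have hPc : Continuous P := by fun_prop
  have hPm : ∀ x, P x ∈ Set.Icc a b := fun x =>
    ⟨fun i => le_max_left _ _, fun i => max_le (hab i).le (min_le_left _ _)⟩
  have hhP : Continuous (fun x => h (P x)) := by
    rw [← continuousOn_univ]
    exact hc.comp hPc.continuousOn (fun x _ => hPm x)
  have hGc : ContinuousOn (fun y : Fin m → ℝ => WithLp.toLp 2 (y - h y)) (Set.Icc a b) :=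
    (PiLp.continuous_toLp 2 _).comp_continuousOn (continuousOn_id.sub hc)
  obtain ⟨C, hC⟩ := isCompact_Icc.exists_bound_of_continuousOn hGc
  obtain ⟨x, hx⟩ := fixed_pt (m := m) (fun x => WithLp.toLp 2 (P x.ofLp - h (P x.ofLp)))
    ((PiLp.continuous_toLp 2 _).comp
      ((hPc.sub hhP).comp (PiLp.continuous_ofLp 2 _)))
    C (fun x => hC _ (hPm _))
  refine ⟨P x.ofLp, hPm _, ?_⟩
  funext i
  have hi : P x.ofLp i - h (P x.ofLp) i = x i := congrArg (fun z : EuclideanSpace ℝ (Fin m) => z i) hx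
  have h1 := ha _ (hPm x.ofLp) i
  have h2 := hb _ (hPm x.ofLp) i
  have hPi : P x.ofLp i = max (a i) (min (b i) (x i)) := rfl
  show h (P x.ofLp) i = 0
  rcases lt_or_ge (x i) (a i) with h3 | h3
  · have : P x.ofLp i = a i := by rw [hPi, max_eq_left]; exact (min_le_right _ _).trans h3.le
    linarith [h1 this]
  · rcases lt_or_ge (b i) (x i) with h4 | h4
    · have : P x.ofLp i = b i := by rw [hPi, min_eq_left h4.le, max_eq_right (hab i).le]
      linarith [h2 this]
    · have : P x.ofLp i = x i := by rw [hPi, min_eq_right h4, max_eq_right h3]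
      linarith

lemma pm' {m : ℕ} (a b : Fin m → ℝ) (hab : ∀ i, a i < b i) (h : (Fin m → ℝ) → (Fin m → ℝ))
    (hc : ContinuousOn h (Set.Icc a b))
    (hs : ∀ i, ∃ σ : ℝ, (∀ x ∈ Set.Icc a b, x i = a i → σ * h x i < 0) ∧
      (∀ x ∈ Set.Icc a b, x i = b i → 0 < σ * h x i)) :
    ∃ x, (∀ i, x i ∈ Set.Ioo (a i) (b i)) ∧ h x = 0 := by
  choose σ hσa hσb using hs
  obtain ⟨x, hx, hx0⟩ := pm a b hab (fun x i => σ i * h x i)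
    (continuousOn_pi.2 fun i => continuousOn_const.mul ((continuous_apply i).comp_continuousOn hc))
    (fun x hx i hi => (hσa i x hx hi).le) (fun x hx i hi => (hσb i x hx hi).le)
  have hx0' : ∀ i, σ i * h x i = 0 := fun i => congrFun hx0 i
  refine ⟨x, fun i => ⟨lt_of_le_of_ne (hx.1 i) fun he => ?_, lt_of_le_of_ne (hx.2 i) fun he => ?_⟩, ?_⟩
  · exact (hσa i x hx he.symm).ne (hx0' i)
  · exact (hσb i x hx he).ne' (hx0' i)
  · funext i
    have hne : σ i ≠ 0 := by
      intro h0
      have := hσa i a ⟨le_rfl, fun i => (hab i).le⟩ rfl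
      simp [h0] at this
    exact (mul_eq_zero.1 (hx0' i)).resolve_left hne

lemma count_zeros (d m : ℕ) (hmd : m ≤ d)
    (h : EuclideanSpace ℝ (Fin d) → EuclideanSpace ℝ (Fin m))
    (hc : ContinuousOn h (unitCube d)) (n : ℕ) (p : ℕ → ℝ) (hp : StrictMono p)
    (hp01 : ∀ j ≤ n, p j ∈ Set.Icc (0 : ℝ) 1)
    (hsign : ∀ j ≤ n, ∀ x ∈ unitCube d, ∀ i : Fin m, x (Fin.castLE hmd i) = p j →
      0 < (-1 : ℝ) ^ j * h x i) :
    ((n ^ m : ℕ) : ℝ≥0∞) ≤ μH[(d : ℝ) - m] {x ∈ unitCube d | h x ∈ ({0} : Set (EuclideanSpace ℝ (Fin m)))} := by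
  set Z := {x ∈ unitCube d | h x ∈ ({0} : Set (EuclideanSpace ℝ (Fin m)))} with hZ
  set C : (Fin m → Fin n) → Set (EuclideanSpace ℝ (Fin d)) := fun J =>
    {x | ∀ i, x (Fin.castLE hmd i) ∈ Set.Ioo (p (J i)) (p (J i + 1))} with hC
  have hCopen : ∀ J, IsOpen (C J) := by
    intro J
    have : C J = ⋂ i, (fun x : EuclideanSpace ℝ (Fin d) => x (Fin.castLE hmd i)) ⁻¹' Set.Ioo (p (J i)) (p (J i + 1)) := by
      ext x; simp [hC]
    rw [this]
    exact isOpen_iInter_of_finite fun i => isOpen_Ioo.preimage (by fun_prop)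
  have hCdisj : Pairwise (Function.onFun Disjoint C) := by
    intro J J' hne
    rw [Function.onFun, Set.disjoint_left]
    intro x hx hx'
    apply hne
    funext i
    have h1 := hx i
    have h2 := hx' i
    have h3 := hp.lt_iff_lt.1 (h1.1.trans h2.2)
    have h4 := hp.lt_iff_lt.1 (h2.1.trans h1.2)
    apply Fin.ext
    omega
  have hone : ∀ J, 1 ≤ μH[(d : ℝ) - m] (C J ∩ Z) := by
    intro J
    set q : EuclideanSpace ℝ (Fin d) → (Fin (d - m) → ℝ) := fun x i => x ⟨m + i, by omega⟩ with hq
    have hqL : LipschitzWith 1 q := by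
      refine LipschitzWith.of_dist_le_mul fun x y => ?_
      rw [NNReal.coe_one, one_mul, dist_pi_le_iff dist_nonneg]
      intro i
      have := PiLp.norm_apply_le (x - y) (⟨m + i, by omega⟩ : Fin d)
      rw [dist_eq_norm, dist_eq_norm]
      exact this
    have hsub : Set.Icc (0 : Fin (d - m) → ℝ) 1 ⊆ q '' (C J ∩ Z) := by
      intro y hy
      set comb : (Fin m → ℝ) → EuclideanSpace ℝ (Fin d) := fun x =>
        WithLp.toLp 2 fun j => if hj : (j : ℕ) < m then x ⟨j, hj⟩ else y ⟨j - m, by omega⟩ with hcomb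
      have hcc : Continuous comb := by
        refine (PiLp.continuous_toLp 2 _).comp (continuous_pi fun j => ?_)
        by_cases hj : (j : ℕ) < m
        · simp only [hj, dif_pos]; fun_prop
        · simp only [hj, dif_neg, not_false_eq_true]; fun_prop
      have hc1 : ∀ x i, comb x (Fin.castLE hmd i) = x i := by
        intro x i
        simp [hcomb]
      have hJ : ∀ i, (J i : ℕ) + 1 ≤ n := fun i => (J i).2
      have hcm : ∀ x ∈ Set.Icc (fun i => p (J i)) (fun i => p (J i + 1)), comb x ∈ unitCube d := by
        intro x hx j
        by_cases hj : (j : ℕ) < m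
        · have : comb x j = x ⟨j, hj⟩ := by simp [hcomb, hj]
          rw [this]
          exact ⟨(hp01 _ (by have := hJ ⟨j, hj⟩; omega)).1.trans (hx.1 _), (hx.2 _).trans (hp01 _ (hJ _)).2⟩
        · have : comb x j = y ⟨j - m, by omega⟩ := by simp [hcomb, hj]
          rw [this]
          exact ⟨hy.1 _, hy.2 _⟩
      obtain ⟨x, hx, hx0⟩ := pm' (fun i => p (J i)) (fun i => p (J i + 1)) (fun i => hp (Nat.lt_succ_self _))
        (fun x => (h (comb x)).ofLp)
        ((PiLp.continuous_ofLp 2 _).comp_continuousOn (hc.comp hcc.continuousOn hcm))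
        (by
          intro i
          refine ⟨(-1) ^ ((J i : ℕ) + 1), fun x hx hxi => ?_, fun x hx hxi => ?_⟩
          · have := hsign (J i) (by have := hJ i; omega) (comb x) (hcm x hx) i (by rw [hc1]; exact hxi)
            rw [pow_succ]; linarith
          · exact hsign (J i + 1) (hJ i) (comb x) (hcm x hx) i (by rw [hc1]; exact hxi))
      refine ⟨comb x, ⟨fun i => by rw [hc1]; exact hx i,
        hcm x ⟨fun i => (hx i).1.le, fun i => (hx i).2.le⟩, ?_⟩, ?_⟩
      · rw [Set.mem_singleton_iff]
        ext i
        exact congrFun hx0 i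
      · funext i
        simp [hq, hcomb]
    have hdim : (d : ℝ) - m = (Fintype.card (Fin (d - m)) : ℝ) := by
      rw [Fintype.card_fin, Nat.cast_sub hmd]
    have h1 := hqL.hausdorffMeasure_image_le (d := (d : ℝ) - m) (by rw [hdim]; positivity) (C J ∩ Z)
    have h2 : μH[(d : ℝ) - m] (Set.Icc (0 : Fin (d - m) → ℝ) 1) = 1 := by
      rw [hdim, hausdorffMeasure_pi_real, Real.volume_Icc_pi]
      simp
    calc (1 : ℝ≥0∞) = μH[(d : ℝ) - m] (Set.Icc (0 : Fin (d - m) → ℝ) 1) := h2.symm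
      _ ≤ μH[(d : ℝ) - m] (q '' (C J ∩ Z)) := measure_mono hsub
      _ ≤ _ := by simpa using h1
  calc ((n ^ m : ℕ) : ℝ≥0∞) = ∑ _J : Fin m → Fin n, (1 : ℝ≥0∞) := by simp
    _ ≤ ∑ J : Fin m → Fin n, (μH[(d : ℝ) - m].restrict Z) (C J) := by
      refine Finset.sum_le_sum fun J _ => ?_
      rw [Measure.restrict_apply (hCopen J).measurableSet]
      exact hone J
    _ = (μH[(d : ℝ) - m].restrict Z) (⋃ J, C J) := by
      rw [measure_iUnion hCdisj (fun J => (hCopen J).measurableSet), tsum_fintype]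
    _ ≤ (μH[(d : ℝ) - m].restrict Z) Set.univ := measure_mono (Set.subset_univ _)
    _ = _ := Measure.restrict_apply_univ _

def rho (k : ℕ) : ℝ := (1 / 2) ^ (k ^ 2)
def pt (k j : ℕ) : ℝ := (1 / 2) ^ k + (j + 1) * rho k

lemma rho_pos (k : ℕ) : 0 < rho k := by unfold rho; positivity

lemma pt_mono (k : ℕ) : StrictMono (pt k) := by
  intro i j hij
  unfold pt
  have : (i : ℝ) < j := by exact_mod_cast hij
  nlinarith [rho_pos k]

lemma pt_bound (k : ℕ) (hk : 2 ≤ k) (j : ℕ) (hj : j ≤ 2 ^ ((k - 1) ^ 2)) :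
    pt k j + rho k ≤ 2 * (1 / 2) ^ k := by
  obtain ⟨l, rfl⟩ := Nat.exists_eq_add_of_le' hk
  have hj' : (j : ℝ) ≤ 2 ^ ((l + 1) ^ 2) := by
    have : j ≤ 2 ^ ((l + 1) ^ 2) := by simpa using hj
    exact_mod_cast this
  have h1 : (2 : ℝ) ^ ((l + 1) ^ 2) * rho (l + 2) ≤ (1 / 2) * (1 / 2) ^ (l + 2) := by
    unfold rho
    have : (l + 2) ^ 2 = (l + 1) ^ 2 + (2 * l + 3) := by ring
    rw [this, pow_add, ← mul_assoc, ← mul_pow]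
    norm_num only [mul_one_div_cancel, one_pow, one_mul]
    rw [← pow_succ']
    exact pow_le_pow_of_le_one (by norm_num) (by norm_num) (by omega)
  have h2 : 2 * rho (l + 2) ≤ (1 / 2) * (1 / 2) ^ (l + 2) := by
    unfold rho
    have h3 : ((1 : ℝ) / 2) ^ ((l + 2) ^ 2) ≤ (1 / 2) ^ (l + 2 + 2) :=
      pow_le_pow_of_le_one (by norm_num) (by norm_num) (by nlinarith)
    rw [pow_add _ (l + 2) 2] at h3
    nlinarith
  have h4 := mul_le_mul_of_nonneg_right hj' (rho_pos (l + 2)).le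
  unfold pt
  linarith

lemma pt_sep (k k' j j' : ℕ) (hk : 2 ≤ k) (hk' : 2 ≤ k') (hj : j ≤ 2 ^ ((k - 1) ^ 2))
    (hj' : j' ≤ 2 ^ ((k' - 1) ^ 2)) (h : |pt k j - pt k' j'| < rho k') : k = k' ∧ j = j' := by
  have hl : ∀ k j, (1 / 2 : ℝ) ^ k + rho k ≤ pt k j := by
    intro k j
    unfold pt
    nlinarith [rho_pos k, Nat.cast_nonneg (α := ℝ) j]
  have h1 := pt_bound k hk j hj
  have h2 := pt_bound k' hk' j' hj'
  have h3 := hl k j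
  have h4 := hl k' j'
  have r1 := rho_pos k
  have r2 := rho_pos k'
  rw [abs_lt] at h
  have hpow : ∀ a b : ℕ, a < b → 2 * (1 / 2 : ℝ) ^ b ≤ (1 / 2) ^ a := by
    intro a b hab
    have : (1 / 2 : ℝ) ^ b ≤ (1 / 2) ^ (a + 1) :=
      pow_le_pow_of_le_one (by norm_num) (by norm_num) hab
    rw [pow_succ] at this
    linarith
  have hkk : k = k' := by
    rcases lt_trichotomy k k' with hlt | heq | hgt
    · have := hpow k k' hlt; linarith
    · exact heq
    · have := hpow k' k hgt; linarith
  refine ⟨hkk, ?_⟩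
  subst hkk
  unfold pt at h
  have h5 : (j : ℝ) - j' < 1 := by
    by_contra hc; push Not at hc; nlinarith
  have h6 : (j' : ℝ) - j < 1 := by
    by_contra hc; push Not at hc; nlinarith
  have h5' : (j : ℝ) < (j' + 1 : ℕ) := by push_cast; linarith
  have h6' : (j' : ℝ) < (j + 1 : ℕ) := by push_cast; linarith
  have := Nat.cast_lt.1 h5'
  have := Nat.cast_lt.1 h6'
  omega

def oscSet (e : ℕ) : Set ℝ :=
  {x | ∃ k j : ℕ, 2 ≤ k ∧ j ≤ 2 ^ ((k - 1) ^ 2) ∧ j % 2 = e ∧ |x - pt k j| < rho k}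

lemma modulus_sub {β : ℝ → ℝ} (hβ : IsModulus β) (a b t : ℝ) (ha : 0 ≤ a) (hb : 0 ≤ b)
    (h : |a - b| ≤ t) : |β a - β b| ≤ β t := by
  obtain ⟨h0, hmono, hsub, -, -⟩ := hβ
  have ht : 0 ≤ t := (abs_nonneg _).trans h
  have key : ∀ a b, 0 ≤ a → 0 ≤ b → a - b ≤ t → β a - β b ≤ β t := by
    intro a b ha hb hab
    have h1 := hmono (Set.mem_Ici.2 ha) (Set.mem_Ici.2 (add_nonneg hb ht)) (by linarith)
    linarith [hsub b t hb ht]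
  rw [abs_le] at h ⊢
  constructor
  · linarith [key b a hb ha (by linarith)]
  · exact key a b ha hb h.2

lemma osc_fun {β : ℝ → ℝ} (hβ : IsModulus β) : ∃ g : ℝ → ℝ,
    (∀ x y, |g x - g y| ≤ β |x - y|) ∧
    ∀ k j : ℕ, 2 ≤ k → j ≤ 2 ^ ((k - 1) ^ 2) → β (rho k) / 2 ≤ (-1) ^ j * g (pt k j) := by
  set D : ℕ → ℝ → ℝ := fun e x => Metric.infDist x (oscSet e)ᶜ with hD
  have hne : ∀ e, (oscSet e)ᶜ.Nonempty := by
    intro e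
    refine ⟨0, ?_⟩
    rintro ⟨k, j, hk, hj, -, hlt⟩
    rw [zero_sub, abs_neg] at hlt
    have h1 := le_abs_self (pt k j)
    have : rho k ≤ pt k j := by
      unfold pt
      have : (0 : ℝ) < (1 / 2) ^ k := by positivity
      nlinarith [rho_pos k, Nat.cast_nonneg (α := ℝ) j]
    linarith
  have hD0 : ∀ e x, 0 ≤ D e x := fun e x => Metric.infDist_nonneg
  have hDL : ∀ e x y, |D e x - D e y| ≤ |x - y| := by
    intro e x y
    have := (Metric.lipschitz_infDist_pt (oscSet e)ᶜ).dist_le_mul x y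
    simpa [Real.dist_eq] using this
  have hbig : ∀ k j : ℕ, 2 ≤ k → j ≤ 2 ^ ((k - 1) ^ 2) → rho k ≤ D (j % 2) (pt k j) := by
    intro k j hk hj
    rw [hD, Metric.le_infDist (hne _)]
    intro y hy
    by_contra hc
    push Not at hc
    refine hy ⟨k, j, hk, hj, rfl, ?_⟩
    rwa [dist_comm, Real.dist_eq] at hc
  have hzero : ∀ k j e : ℕ, 2 ≤ k → j ≤ 2 ^ ((k - 1) ^ 2) → j % 2 ≠ e → D e (pt k j) = 0 := by
    intro k j e hk hj he
    apply Metric.infDist_zero_of_mem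
    rintro ⟨k', j', hk', hj', he', hlt⟩
    obtain ⟨rfl, rfl⟩ := pt_sep k k' j j' hk hk' hj hj' hlt
    exact he he'
  refine ⟨fun x => (β (D 0 x) - β (D 1 x)) / 2, fun x y => ?_, fun k j hk hj => ?_⟩
  · have h1 := modulus_sub hβ _ _ _ (hD0 0 x) (hD0 0 y) (hDL 0 x y)
    have h2 := modulus_sub hβ _ _ _ (hD0 1 x) (hD0 1 y) (hDL 1 x y)
    rw [abs_le] at h1 h2 ⊢
    constructor <;> linarith [h1.1, h1.2, h2.1, h2.2]
  · have h0 := hβ.2.2.2.1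
    have h1 := hβ.2.1 (Set.mem_Ici.2 (rho_pos k).le) (Set.mem_Ici.2 (hD0 _ _)) (hbig k j hk hj)
    rcases Nat.even_or_odd j with he | ho
    · rw [Nat.even_iff.1 he] at h1
      simp only [he.neg_one_pow, hzero k j 1 hk hj (by rw [Nat.even_iff.1 he]; norm_num), h0]
      linarith
    · rw [Nat.odd_iff.1 ho] at h1
      simp only [ho.neg_one_pow, hzero k j 0 hk hj (by rw [Nat.odd_iff.1 ho]; norm_num), h0]
      linarith

lemma arith (m : ℕ) (ρ : ℝ) (h0 : 0 < ρ) (h5 : ρ ≤ 2 ^ (-5 : ℤ)) :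
    ∃ k : ℕ, 2 ≤ k ∧ ρ < rho k ∧
      (16 / ρ) ^ m * 2 ^ (-(4 * (m : ℝ)) * Real.sqrt |Real.logb 2 ρ|) ≤
        (((2 ^ ((k - 1) ^ 2)) ^ m : ℕ) : ℝ) := by
  set l := Real.logb 2 ρ with hl
  have hρ : ρ = 2 ^ l := (Real.rpow_logb (by norm_num) (by norm_num) h0).symm
  have hl5 : l ≤ -5 := by
    have h1 : (2 : ℝ) ^ l ≤ 2 ^ (-5 : ℝ) := by
      rw [← hρ]
      refine h5.trans (le_of_eq ?_)
      rw [← Real.rpow_intCast]; norm_num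
    exact (Real.rpow_le_rpow_left_iff (by norm_num)).1 h1
  set s := Real.sqrt |l| with hs
  have hs2 : s ^ 2 = -l := by rw [hs, Real.sq_sqrt (abs_nonneg _), abs_of_nonpos (by linarith)]
  have hs0 : 0 ≤ s := Real.sqrt_nonneg _
  have hs2' : 2 < s := by nlinarith
  have hceil : 2 < ⌈s⌉₊ := Nat.lt_ceil.2 (by exact_mod_cast hs2')
  obtain ⟨k, hk⟩ : ∃ k, ⌈s⌉₊ = k + 1 := ⟨⌈s⌉₊ - 1, by omega⟩
  have hks : (k : ℝ) < s := Nat.lt_ceil.1 (by omega)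
  have hsk : s ≤ k + 1 := by have := Nat.le_ceil s; rw [hk] at this; exact_mod_cast this
  have hk2 : 2 ≤ k := by omega
  refine ⟨k, hk2, ?_, ?_⟩
  · have : rho k = 2 ^ (-((k : ℝ) ^ 2)) := by
      unfold rho
      rw [Real.rpow_neg (by norm_num), one_div, inv_pow]
      norm_cast
    rw [this, hρ]
    apply Real.rpow_lt_rpow_of_exponent_lt (by norm_num)
    have : (k : ℝ) ^ 2 < s ^ 2 := by gcongr
    linarith
  · have h1 : (16 / ρ) ^ m = 2 ^ ((4 - l) * m) := by
      rw [Real.rpow_mul (by norm_num), Real.rpow_natCast, Real.rpow_sub (by norm_num), ← hρ]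
      norm_num
    obtain ⟨q, rfl⟩ := Nat.exists_eq_add_of_le' hk2
    have h2 : (((2 ^ ((q + 2 - 1) ^ 2)) ^ m : ℕ) : ℝ) = 2 ^ (((q : ℝ) + 1) ^ 2 * m) := by
      rw [Real.rpow_mul (by norm_num), Real.rpow_natCast]
      have : q + 2 - 1 = q + 1 := by omega
      rw [this]
      norm_cast
    rw [h1, h2, ← Real.rpow_add (by norm_num)]
    apply Real.rpow_le_rpow_of_exponent_le (by norm_num)
    have h3 : (s - 2) ^ 2 ≤ ((q : ℝ) + 1) ^ 2 := by
      apply pow_le_pow_left₀ (by linarith)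
      push_cast at hsk
      linarith
    have h4 := mul_le_mul_of_nonneg_right h3 (Nat.cast_nonneg (α := ℝ) m)
    have h5 : (4 - l) * m + -(4 * (m : ℝ)) * s = (s - 2) ^ 2 * m := by
      have : l = - s ^ 2 := by linarith
      rw [this]; ring
    rw [h5]; exact h4

/-- there is a continuous `f̃ : [0,1]^d → ℝ^m` admitting `β` as a modulus
of continuity such that for every `0 < ε < (1/(2√m))·β(2⁻⁵)`,
`N^{f̃}_{{0}}(ε) ≥ (16/Ψ_β(2√m ε))^m · 2^{-4m·√|log₂ Ψ_β(2√m ε)|}`. -/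
theorem stmt2 (d m : ℕ) (hm : 1 ≤ m) (hmd : m ≤ d)
    (β : ℝ → ℝ) (hβ : IsModulus β) :
    ∃ f : EuclideanSpace ℝ (Fin d) → EuclideanSpace ℝ (Fin m),
      ContinuousOn f (unitCube d) ∧
      (∀ x ∈ unitCube d, ∀ y ∈ unitCube d, dist (f x) (f y) ≤ β (dist x y)) ∧
      ∀ ε : ℝ, 0 < ε → ε < (1 / (2 * Real.sqrt m)) * β (2 ^ (-5 : ℤ)) →
        ENNReal.ofReal ((16 / Psi β (2 * Real.sqrt m * ε)) ^ m *
            2 ^ (-(4 * (m : ℝ)) * Real.sqrt |Real.logb 2 (Psi β (2 * Real.sqrt m * ε))|))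
          ≤ NW d m ((d : ℝ) - m) {0} f ε := by
  obtain ⟨g, hgm, hgo⟩ := osc_fun hβ
  obtain ⟨hβ0, hmono, hsub, hz, hlim⟩ := id hβ
  have hm0 : (0 : ℝ) < m := by exact_mod_cast hm
  have hsm : 0 < Real.sqrt m := Real.sqrt_pos.2 hm0
  have hlim' : ∀ η > 0, ∃ δ > 0, ∀ t, 0 ≤ t → t < δ → β t < η := by
    intro η hη
    rw [Metric.tendsto_nhdsWithin_nhds] at hlim
    obtain ⟨δ, hδ, h⟩ := hlim η hη
    refine ⟨δ, hδ, fun t ht htδ => ?_⟩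
    rcases ht.eq_or_lt with rfl | ht'
    · rw [hz]; exact hη
    · have := h (Set.mem_Ioi.2 ht') (by simpa [abs_of_pos ht'] using htδ)
      rw [Real.dist_eq, sub_zero] at this
      exact (le_abs_self _).trans_lt this
  set f : EuclideanSpace ℝ (Fin d) → EuclideanSpace ℝ (Fin m) := fun x =>
    WithLp.toLp 2 fun i => g (x (Fin.castLE hmd i)) / Real.sqrt m with hf
  have hfi : ∀ x i, f x i = g (x (Fin.castLE hmd i)) / Real.sqrt m := fun x i => rfl
  have hfm : ∀ x y, dist (f x) (f y) ≤ β (dist x y) := by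
    intro x y
    have hB := hβ0 _ (dist_nonneg (x := x) (y := y))
    rw [EuclideanSpace.dist_eq]
    apply Real.sqrt_le_iff.2 ⟨hB, ?_⟩
    have : ∀ i ∈ (Finset.univ : Finset (Fin m)), dist (f x i) (f y i) ^ 2 ≤ β (dist x y) ^ 2 / m := by
      intro i _
      rw [hfi, hfi, Real.dist_eq, ← sub_div, abs_div, abs_of_pos hsm, div_pow, Real.sq_sqrt hm0.le]
      gcongr
      refine (hgm _ _).trans (hmono (Set.mem_Ici.2 (abs_nonneg _)) (Set.mem_Ici.2 dist_nonneg) ?_)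
      have := PiLp.norm_apply_le (x - y) (Fin.castLE hmd i)
      rw [dist_eq_norm]
      exact this
    refine (Finset.sum_le_sum this).trans (le_of_eq ?_)
    simp
    field_simp
  refine ⟨f, ?_, fun x _ y _ => hfm x y, ?_⟩
  · refine Continuous.continuousOn (Metric.continuous_iff.2 fun b η hη => ?_)
    obtain ⟨δ, hδ, h⟩ := hlim' η hη
    exact ⟨δ, hδ, fun a ha => (hfm a b).trans_lt (h _ dist_nonneg ha)⟩
  intro ε hε hε2
  set s := 2 * Real.sqrt m * ε with hs
  have hs0 : 0 < s := by positivity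
  have hsβ : s < β (2 ^ (-5 : ℤ)) := by
    rw [one_div, inv_mul_eq_div, lt_div_iff₀ (by positivity)] at hε2
    rw [hs]; linarith
  have hub : ∀ δ ∈ {δ : ℝ | 0 ≤ δ ∧ β δ ≤ s}, δ ≤ 2 ^ (-5 : ℤ) := by
    rintro δ ⟨hδ, hδs⟩
    by_contra hc
    push Not at hc
    have := hmono (Set.mem_Ici.2 (by positivity)) (Set.mem_Ici.2 hδ) hc.le
    linarith
  have hP5 : Psi β s ≤ 2 ^ (-5 : ℤ) := csSup_le ⟨0, le_rfl, by rw [hz]; exact hs0.le⟩ hub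
  have hP0 : 0 < Psi β s := by
    obtain ⟨δ, hδ, h⟩ := hlim' s hs0
    have : δ / 2 ≤ Psi β s :=
      le_csSup ⟨_, hub⟩ ⟨by linarith, (h (δ / 2) (by linarith) (by linarith)).le⟩
    linarith
  obtain ⟨k, hk, hkρ, hbound⟩ := arith m (Psi β s) hP0 hP5
  have hβk : s < β (rho k) := by
    by_contra hc
    push Not at hc
    have : rho k ≤ Psi β s := le_csSup ⟨_, hub⟩ ⟨(rho_pos k).le, hc⟩
    linarith
  unfold NW
  refine le_iInf fun h => le_iInf fun hc => le_iInf fun hh => ?_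
  have hcount := count_zeros d m hmd h hc (2 ^ ((k - 1) ^ 2)) (pt k) (pt_mono k)
    (by
      intro j hj
      have h1 := pt_bound k hk j hj
      have h2 : (1 / 2 : ℝ) ^ k ≤ (1 / 2) ^ 2 := pow_le_pow_of_le_one (by norm_num) (by norm_num) hk
      refine ⟨?_, by linarith [rho_pos k]⟩
      unfold pt
      have := rho_pos k
      positivity)
    (by
      intro j hj x hx i hxi
      have h1 := hgo k j hk hj
      have h2 : |h x i - f x i| ≤ ε := by
        have := PiLp.norm_apply_le (h x - f x) i
        have h3 := hh x hx
        rw [dist_eq_norm] at h3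
        exact this.trans h3
      have h3 : ε < (-1) ^ j * f x i := by
        rw [hfi, hxi, ← mul_div_assoc, lt_div_iff₀ hsm]
        rw [hs] at hβk
        linarith
      have h4 : |(-1) ^ j * (h x i - f x i)| ≤ ε := by
        rw [abs_mul, abs_pow, abs_neg, abs_one, one_pow, one_mul]; exact h2
      have h5 := (abs_le.1 h4).1
      linarith [mul_sub ((-1 : ℝ) ^ j) (h x i) (f x i)])
  refine le_trans ?_ hcount
  rw [← ENNReal.ofReal_natCast]
  exact ENNReal.ofReal_le_ofReal hbound
end
end

section
/- Let d, m, p be integers with 0 ≤ p < m ≤ p + d, let r₀ > 0, and set W = [−r₀, r₀]^p × {0}^{m−p} ⊂ ℝ^m. For every modulus of continuity β there exists a continuous function g : [0,1]^d → ℝ^m admitting β as a modulus of continuity such that for every ε with 0 < ε ≤ min{ (1/(2√(m−p))) · β(2^{−5}), r₀ }, N^g_W(ε) ≥ (16 / Ψ_β(2√(m−p) · ε))^{m−p} · 2^{−4(m−p)·√(|log₂ Ψ_β(2√(m−p) · ε)|)}. -/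
open MeasureTheory ENNReal
noncomputable section

/-- The box `[-r₀, r₀]^p × {0}^{m-p}` in `ℝ^m`. -/
def boxSlice (m p : ℕ) (r₀ : ℝ) : Set (EuclideanSpace ℝ (Fin m)) :=
  {y | ∀ i : Fin m, ((i : ℕ) < p → |y i| ≤ r₀) ∧ (p ≤ (i : ℕ) → y i = 0)}


namespace PM

abbrev Pt := ℕ → ℕ

def dd (ω : List Pt → ZMod 2) : List Pt → ZMod 2
  | [] => 0
  | a :: w => ω w + dd (fun u => ω (a :: u)) w

def pr (lo hi : Pt → Pt) (ω : List Pt → ZMod 2) : List Pt → ZMod 2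
  | [] => 0
  | a :: w => ω (lo a :: hi a :: w.map hi) + pr lo hi (fun u => ω (lo a :: u)) w

def mf (f : Pt → ZMod 2) (ω : List Pt → ZMod 2) : List Pt → ZMod 2
  | [] => 0
  | a :: w => f a * ω (a :: w)

lemma dd_add (ω η : List Pt → ZMod 2) (w : List Pt) :
    dd (fun u => ω u + η u) w = dd ω w + dd η w := by
  induction w generalizing ω η with
  | nil => simp [dd]
  | cons a w ih => simp only [dd, ih]; ring

lemma dd_map (φ : Pt → Pt) (ω : List Pt → ZMod 2) (w : List Pt) :
    dd (fun u => ω (u.map φ)) w = dd ω (w.map φ) := by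
  induction w generalizing ω with
  | nil => simp [dd]
  | cons a w ih =>
    simp only [dd, List.map_cons]
    rw [ih (fun u => ω (φ a :: u))]

lemma dd_mul (c : ZMod 2) (ω : List Pt → ZMod 2) (w : List Pt) :
    dd (fun u => c * ω u) w = c * dd ω w := by
  induction w generalizing ω with
  | nil => simp [dd]
  | cons a w ih => simp only [dd, ih]; ring

lemma dd_dd (ω : List Pt → ZMod 2) (w : List Pt) : dd (dd ω) w = 0 := by
  induction w generalizing ω with
  | nil => simp [dd]
  | cons a w ih =>
    simp only [dd]
    rw [dd_add, ih, add_zero, CharTwo.add_self_eq_zero]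

lemma dd_congr (P : Pt → Prop) (ω η : List Pt → ZMod 2) (w : List Pt) (hw : ∀ a ∈ w, P a)
    (h : ∀ u, (∀ a ∈ u, P a) → ω u = η u) : dd ω w = dd η w := by
  induction w generalizing ω η with
  | nil => simp [dd]
  | cons a w ih =>
    simp only [dd]
    have hw' : ∀ x ∈ w, P x := fun x hx => hw x (List.mem_cons_of_mem _ hx)
    rw [h w hw', ih (fun u => ω (a :: u)) (fun u => η (a :: u)) hw']
    intro u hu
    apply h
    intro x hx
    rcases List.mem_cons.1 hx with rfl | hx
    · exact hw _ List.mem_cons_self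
    · exact hu x hx

lemma dd_zero (w : List Pt) : dd (fun _ => 0) w = 0 := by
  induction w with
  | nil => simp [dd]
  | cons a w ih => simp [dd, ih]

lemma pr_dd (lo hi : Pt → Pt) (ω : List Pt → ZMod 2) (w : List Pt) :
    pr lo hi (dd ω) w = dd (pr lo hi ω) w + ω (w.map hi) + ω (w.map lo) := by
  have pr_add : ∀ (ω η : List Pt → ZMod 2) (w : List Pt),
      pr lo hi (fun u => ω u + η u) w = pr lo hi ω w + pr lo hi η w := by
    intro ω η w
    induction w generalizing ω η with
    | nil => simp [pr]
    | cons a w ih => simp only [pr, ih]; ring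
  induction w generalizing ω with
  | nil => simp [pr, dd, CharTwo.add_self_eq_zero]
  | cons a w ih =>
    simp only [pr, dd, List.map_cons]
    rw [pr_add, dd_add, ih, dd_map hi (fun u => ω (lo a :: hi a :: u))]
    have := CharTwo.add_self_eq_zero (ω (lo a :: w.map hi))
    linear_combination this

lemma pr_vanish (lo hi : Pt → Pt) (ω : List Pt → ZMod 2) (w : List Pt)
    (h : ∀ u : List Pt, (∀ x ∈ u, ∃ a ∈ w, x = lo a ∨ x = hi a) → ω u = 0) :
    pr lo hi ω w = 0 := by
  induction w generalizing ω with
  | nil => simp [pr]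
  | cons a w ih =>
    simp only [pr]
    rw [h, ih, add_zero]
    · intro u hu
      apply h
      intro x hx
      rcases List.mem_cons.1 hx with rfl | hx
      · exact ⟨a, List.mem_cons_self, Or.inl rfl⟩
      · obtain ⟨b, hb, hb'⟩ := hu x hx
        exact ⟨b, List.mem_cons_of_mem _ hb, hb'⟩
    · intro x hx
      simp only [List.mem_cons, List.mem_map] at hx
      rcases hx with rfl | rfl | ⟨b, hb, rfl⟩
      · exact ⟨a, by simp, Or.inl rfl⟩
      · exact ⟨a, by simp, Or.inr rfl⟩
      · exact ⟨b, by simp [hb], Or.inr rfl⟩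

def cup (f : ℕ → Pt → ZMod 2) : ℕ → List Pt → ZMod 2
  | 0 => dd (fun w => if w = [] then 1 else 0)
  | k + 1 => dd (mf (f k) (cup f k))

lemma dd_cup (f : ℕ → Pt → ZMod 2) (k : ℕ) (w : List Pt) : dd (cup f k) w = 0 := by
  cases k <;> exact dd_dd _ _

lemma cup_map (φ : Pt → Pt) (f : ℕ → Pt → ZMod 2) (k : ℕ) (w : List Pt) :
    cup f k (w.map φ) = cup (fun q x => f q (φ x)) k w := by
  induction k generalizing w with
  | zero =>
    simp only [cup]
    rw [← dd_map]; simp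
  | succ k ih =>
    simp only [cup]
    rw [← dd_map]
    congr 1
    funext u
    cases u with
    | nil => simp [mf]
    | cons a u => simp only [mf, List.map_cons]; rw [← ih]; simp

lemma cup_vanish (f : ℕ → Pt → ZMod 2) (k q : ℕ) (hq : q < k) (c : ZMod 2) (w : List Pt)
    (hw : ∀ a ∈ w, f q a = c) : cup f k w = 0 := by
  induction k generalizing w with
  | zero => omega
  | succ k ih =>
    simp only [cup]
    rcases Nat.lt_succ_iff_lt_or_eq.1 hq with h | rfl
    · rw [dd_congr (fun a => f q a = c) _ (fun _ => 0) w hw, dd_zero]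
      intro u hu
      cases u with
      | nil => simp [mf]
      | cons a u => simp only [mf]; rw [ih h _ hu, mul_zero]
    · rw [dd_congr (fun a => f q a = c) _ (fun u => c * cup f q u) w hw, dd_mul, dd_cup, mul_zero]
      intro u hu
      cases u with
      | nil => cases q <;> simp [mf, cup, dd]
      | cons a u => simp only [mf]; rw [hu a (by simp)]

def up (k s : ℕ) (a : Pt) : Pt := Function.update a k s

def EE (N : ℕ) : ℕ → (List Pt → ZMod 2) → ZMod 2
  | 0, ω => ω [fun _ => 0]
  | k + 1, ω => ∑ s ∈ Finset.range N, EE N k (pr (up k s) (up k (s + 1)) ω)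

lemma EE_add (N k : ℕ) (ω η : List Pt → ZMod 2) :
    EE N k (fun u => ω u + η u) = EE N k ω + EE N k η := by
  have pr_add : ∀ (lo hi : Pt → Pt) (ω η : List Pt → ZMod 2),
      pr lo hi (fun u => ω u + η u) = fun w => pr lo hi ω w + pr lo hi η w := by
    intro lo hi ω η
    funext w
    induction w generalizing ω η with
    | nil => simp [pr]
    | cons a w ih => simp only [pr, ih]; ring
  induction k generalizing ω η with
  | zero => rfl
  | succ k ih =>
    simp only [EE]
    rw [← Finset.sum_add_distrib]
    refine Finset.sum_congr rfl fun s _ => ?_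
    rw [pr_add, ih]

def Small (w : List Pt) : Prop := ∃ c : Pt, ∀ a ∈ w, ∀ q, c q ≤ a q ∧ a q ≤ c q + 1

lemma EE_vanish (N k : ℕ) (ω : List Pt → ZMod 2) (h : ∀ w, Small w → ω w = 0) :
    EE N k ω = 0 := by
  induction k generalizing ω with
  | zero => exact h _ ⟨fun _ => 0, by simp⟩
  | succ k ih =>
    simp only [EE]
    refine Finset.sum_eq_zero fun s _ => ih _ ?_
    rintro w ⟨c, hc⟩
    apply pr_vanish
    intro u hu
    apply h
    refine ⟨up k s c, ?_⟩
    intro x hx q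
    obtain ⟨a, ha, hx⟩ := hu x hx
    have := hc a ha q
    by_cases hqk : q = k
    · subst hqk
      rcases hx with rfl | rfl <;> simp [up]
    · rcases hx with rfl | rfl <;> simpa [up, hqk] using this

lemma EE_dd_succ (N k : ℕ) (ω : List Pt → ZMod 2)
    (hd : ∀ s, EE N k (dd (pr (up k s) (up k (s + 1)) ω)) = 0) :
    EE N (k + 1) (dd ω) =
      EE N k (fun w => ω (w.map (up k N))) + EE N k (fun w => ω (w.map (up k 0))) := by
  have key : ∀ s, EE N k (pr (up k s) (up k (s + 1)) (dd ω)) =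
      EE N k (fun w => ω (w.map (up k (s + 1)))) + EE N k (fun w => ω (w.map (up k s))) := by
    intro s
    have : pr (up k s) (up k (s + 1)) (dd ω) = fun w =>
        (fun w => dd (pr (up k s) (up k (s + 1)) ω) w + ω (w.map (up k (s + 1)))) w
          + ω (w.map (up k s)) := by
      funext w
      rw [pr_dd]
    rw [this, EE_add, EE_add, hd, zero_add]
  simp only [EE]
  rw [Finset.sum_congr rfl fun s _ => key s]
  have : ∀ n, ∑ s ∈ Finset.range n, (EE N k (fun w => ω (w.map (up k (s + 1))))
      + EE N k (fun w => ω (w.map (up k s)))) =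
      EE N k (fun w => ω (w.map (up k n))) + EE N k (fun w => ω (w.map (up k 0))) := by
    intro n
    induction n with
    | zero => simp [CharTwo.add_self_eq_zero]
    | succ n ih =>
      rw [Finset.sum_range_succ, ih]
      have := CharTwo.add_self_eq_zero (EE N k (fun w => ω (w.map (up k n))))
      linear_combination this
  exact this N

lemma EE_dd (N k : ℕ) (ω : List Pt → ZMod 2)
    (h : ∀ w : List Pt, ∀ q < k, ((∀ a ∈ w, a q = 0) ∨ (∀ a ∈ w, a q = N)) → ω w = 0)
    (h0 : k = 0 → ω [] = 0) :
    EE N k (dd ω) = 0 := by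
  induction k generalizing ω with
  | zero => simp [EE, dd, h0]
  | succ k ih =>
    rw [EE_dd_succ]
    · rw [EE_vanish, EE_vanish, add_zero]
      · intro w _
        refine h _ k (by omega) (Or.inl ?_)
        simp [up]
      · intro w _
        refine h _ k (by omega) (Or.inr ?_)
        simp [up]
    · intro s
      apply ih
      · intro w q hq hw
        apply pr_vanish
        intro u hu
        apply h _ q (by omega)
        rcases hw with hw | hw
        · left
          intro x hx
          obtain ⟨a, ha, hx⟩ := hu x hx
          rcases hx with rfl | rfl <;> simp [up, hq.ne, hw a ha]
        · right
          intro x hx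
          obtain ⟨a, ha, hx⟩ := hu x hx
          rcases hx with rfl | rfl <;> simp [up, hq.ne, hw a ha]
      · simp [pr]

lemma EE_cup (N k : ℕ) (f : ℕ → Pt → ZMod 2)
    (h0 : ∀ q < k, ∀ x : Pt, x q = 0 → f q x = 0)
    (h1 : ∀ q < k, ∀ x : Pt, x q = N → f q x = 1) : EE N k (cup f k) = 1 := by
  induction k generalizing f with
  | zero => simp [EE, cup, dd]
  | succ k ih =>
    have hside : ∀ w : List Pt, ∀ q < k, ((∀ a ∈ w, a q = 0) ∨ (∀ a ∈ w, a q = N)) →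
        mf (f k) (cup f k) w = 0 := by
      intro w q hq hw
      cases w with
      | nil => simp [mf]
      | cons a w =>
        simp only [mf]
        rcases hw with hw | hw
        · rw [cup_vanish f k q hq 0 _ fun a ha => h0 q (by omega) a (hw a ha), mul_zero]
        · rw [cup_vanish f k q hq 1 _ fun a ha => h1 q (by omega) a (hw a ha), mul_zero]
    simp only [cup]
    rw [EE_dd_succ]
    · rw [EE_vanish N k (fun w => mf (f k) (cup f k) (w.map (up k 0)))]
      · rw [add_zero]
        have : (fun w => mf (f k) (cup f k) (List.map (up k N) w)) =
            cup (fun q x => f q (up k N x)) k := by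
          funext w
          rw [← cup_map]
          cases w with
          | nil => cases k <;> simp [mf, cup, dd]
          | cons a w =>
            simp only [List.map_cons, mf]
            rw [h1 k (by omega) _ (by simp [up]), one_mul]
        rw [this]
        apply ih
        · intro q hq x hx
          exact h0 q (by omega) _ (by simp [up, hq.ne, hx])
        · intro q hq x hx
          exact h1 q (by omega) _ (by simp [up, hq.ne, hx])
      · intro w _
        cases w with
        | nil => simp [mf]
        | cons a w =>
          simp only [List.map_cons, mf]
          rw [h0 k (by omega) _ (by simp [up]), zero_mul]
    · intro s
      apply EE_dd
      · intro w q hq hw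
        apply pr_vanish
        intro u hu
        apply hside _ q hq
        rcases hw with hw | hw
        · left
          intro x hx
          obtain ⟨a, ha, hx⟩ := hu x hx
          rcases hx with rfl | rfl <;> simp [up, hq.ne, hw a ha]
        · right
          intro x hx
          obtain ⟨a, ha, hx⟩ := hu x hx
          rcases hx with rfl | rfl <;> simp [up, hq.ne, hw a ha]
      · simp [pr]

/-- combinatorial Poincaré–Miranda -/
lemma comb (N k : ℕ) (f : ℕ → Pt → ZMod 2)
    (h0 : ∀ q < k, ∀ x : Pt, x q = 0 → f q x = 0)
    (h1 : ∀ q < k, ∀ x : Pt, x q = N → f q x = 1) :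
    ∃ c : Pt, ∀ q < k, ∃ a b : Pt, f q a = 0 ∧ f q b = 1 ∧
      (∀ i, c i ≤ a i ∧ a i ≤ c i + 1) ∧ (∀ i, c i ≤ b i ∧ b i ≤ c i + 1) := by
  by_contra hcon
  have := EE_cup N k f h0 h1
  rw [EE_vanish] at this
  · exact zero_ne_one this
  rintro w ⟨c, hc⟩
  by_contra hne
  apply hcon
  refine ⟨c, fun q hq => ?_⟩
  have z2 : ∀ x : ZMod 2, x = 0 ∨ x = 1 := by decide
  have hA : ∃ a ∈ w, f q a = 0 := by
    by_contra h
    push Not at h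
    exact hne (cup_vanish f k q hq 1 w fun a ha => (z2 _).resolve_left (h a ha))
  have hB : ∃ a ∈ w, f q a = 1 := by
    by_contra h
    push Not at h
    exact hne (cup_vanish f k q hq 0 w fun a ha => (z2 _).resolve_right (h a ha))
  obtain ⟨a, ha, ha'⟩ := hA
  obtain ⟨b, hb, hb'⟩ := hB
  exact ⟨a, b, ha', hb', hc a ha, hc b hb⟩

end PM

lemma exists_approx {k : ℕ} (F : (Fin k → ℝ) → Fin k → ℝ)
    (h0 : ∀ x ∈ Set.Icc (0 : Fin k → ℝ) 1, ∀ q, x q = 0 → 0 ≤ F x q)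
    (h1 : ∀ x ∈ Set.Icc (0 : Fin k → ℝ) 1, ∀ q, x q = 1 → F x q ≤ 0) (n : ℕ) :
    ∃ x ∈ Set.Icc (0 : Fin k → ℝ) 1, ∀ q : Fin k, ∃ a ∈ Set.Icc (0 : Fin k → ℝ) 1,
      ∃ b ∈ Set.Icc (0 : Fin k → ℝ) 1, 0 ≤ F a q ∧ F b q ≤ 0 ∧
        dist a x ≤ 1 / ((n : ℝ) + 1) ∧ dist b x ≤ 1 / ((n : ℝ) + 1) := by
  classical
  have hn : (0 : ℝ) < (n : ℝ) + 1 := by positivity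
  set pt : PM.Pt → Fin k → ℝ := fun a q => min ((a q : ℝ) / ((n : ℝ) + 1)) 1 with hpt
  have hmem : ∀ a, pt a ∈ Set.Icc (0 : Fin k → ℝ) 1 := by
    intro a
    constructor
    · intro q; simp only [hpt, Pi.zero_apply]; positivity
    · intro q; simp only [hpt, Pi.one_apply]; exact min_le_right _ _
  have hdist : ∀ a c : PM.Pt, (∀ i, c i ≤ a i ∧ a i ≤ c i + 1) →
      dist (pt a) (pt c) ≤ 1 / ((n : ℝ) + 1) := by
    intro a c h
    rw [dist_pi_le_iff (by positivity)]
    intro q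
    simp only [hpt]
    rw [Real.dist_eq]
    refine (abs_min_sub_min_le_max _ _ _ _).trans ?_
    rw [sub_self, abs_zero, max_eq_left (abs_nonneg _), ← sub_div, abs_div, abs_of_pos hn]
    gcongr
    have h1 : (c q : ℝ) ≤ a q := by exact_mod_cast (h q).1
    have h2 : (a q : ℝ) ≤ c q + 1 := by exact_mod_cast (h q).2
    rw [abs_le]; constructor <;> linarith
  set f : ℕ → PM.Pt → ZMod 2 := fun q a => if h : q < k then
    (if a q = 0 then 0 else if n + 1 ≤ a q then 1 else if 0 < F (pt a) ⟨q, h⟩ then 0 else 1)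
    else 0 with hf
  obtain ⟨c, hc⟩ := PM.comb (n + 1) k f (by
    intro q hq x hx; simp [hf, hx]) (by
    intro q hq x hx; simp [hf, hx, hq])
  refine ⟨pt c, hmem c, fun q => ?_⟩
  obtain ⟨a, b, ha, hb, hac, hbc⟩ := hc q q.2
  refine ⟨pt a, hmem a, pt b, hmem b, ?_, ?_, hdist a c hac, hdist b c hbc⟩
  · simp only [hf, q.2, dite_true] at ha
    split_ifs at ha with h1 h2 h3
    · exact h0 _ (hmem a) q (by simp [hpt, h1])
    · exact absurd ha (by decide)
    · exact h3.le
    · exact absurd ha (by decide)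
  · simp only [hf, q.2, dite_true] at hb
    split_ifs at hb with h1' h2 h3
    · exact absurd hb (by decide)
    · apply h1 _ (hmem b) q
      simp only [hpt]
      apply min_eq_right
      rw [le_div_iff₀ hn, one_mul]
      exact_mod_cast h2
    · exact absurd hb (by decide)
    · exact not_lt.1 h3

lemma miranda {k : ℕ} (F : (Fin k → ℝ) → Fin k → ℝ)
    (hF : ContinuousOn F (Set.Icc 0 1))
    (h0 : ∀ x ∈ Set.Icc (0 : Fin k → ℝ) 1, ∀ q, x q = 0 → 0 ≤ F x q)
    (h1 : ∀ x ∈ Set.Icc (0 : Fin k → ℝ) 1, ∀ q, x q = 1 → F x q ≤ 0) :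
    ∃ x ∈ Set.Icc (0 : Fin k → ℝ) 1, F x = 0 := by
  choose x hx a ha b hb hFa hFb hda hdb using exists_approx F h0 h1
  obtain ⟨y, hy, φ, hφ, hlim⟩ := isCompact_Icc.tendsto_subseq hx
  refine ⟨y, hy, ?_⟩
  have hz : Filter.Tendsto (fun n => 1 / ((φ n : ℝ) + 1)) Filter.atTop (nhds 0) :=
    tendsto_one_div_add_atTop_nhds_zero_nat.comp hφ.tendsto_atTop
  have aux : ∀ (u : ℕ → Fin k → ℝ), (∀ n, u n ∈ Set.Icc (0 : Fin k → ℝ) 1) →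
      (∀ n, dist (u n) (x n) ≤ 1 / ((n : ℝ) + 1)) → ∀ q,
      Filter.Tendsto (fun n => F (u (φ n)) q) Filter.atTop (nhds (F y q)) := by
    intro u hu hd q
    have h1 : Filter.Tendsto (fun n => u (φ n)) Filter.atTop (nhds y) := by
      rw [tendsto_iff_dist_tendsto_zero] at hlim ⊢
      have h2 := hz.add hlim
      rw [add_zero] at h2
      refine squeeze_zero (fun _ => dist_nonneg) (fun n => ?_) h2
      exact (dist_triangle _ (x (φ n)) _).trans (add_le_add (hd _) le_rfl)
    have h2 : Filter.Tendsto (fun n => u (φ n)) Filter.atTop (nhdsWithin y (Set.Icc 0 1)) :=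
      tendsto_nhdsWithin_iff.2 ⟨h1, Filter.Eventually.of_forall fun n => hu _⟩
    exact (tendsto_pi_nhds.1 ((hF y hy).tendsto.comp h2)) q
  funext q
  apply le_antisymm
  · exact le_of_tendsto' (aux (fun n => b n q) (fun n => hb n q) (fun n => hdb n q) q)
      fun n => hFb _ q
  · exact ge_of_tendsto' (aux (fun n => a n q) (fun n => ha n q) (fun n => hda n q) q)
      fun n => hFa _ q

lemma mcshane {S : Type} [Nonempty S] (b : ℝ → ℝ) (hb0 : ∀ s, 0 ≤ s → 0 ≤ b s)
    (hbm : MonotoneOn b (Set.Ici 0)) (hbs : ∀ s t : ℝ, 0 ≤ s → 0 ≤ t → b (s + t) ≤ b s + b t)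
    (hbz : b 0 = 0) (pos v : S → ℝ) (C : ℝ) (hC : ∀ s, C ≤ v s)
    (hv : ∀ s t, v s - v t ≤ b |pos s - pos t|) :
    ∃ g : ℝ → ℝ, (∀ x y, |g x - g y| ≤ b |x - y|) ∧ ∀ s, g (pos s) = v s := by
  have hbdd : ∀ x, BddBelow (Set.range fun s => v s + b |x - pos s|) := by
    intro x
    refine ⟨C, ?_⟩
    rintro _ ⟨s, rfl⟩
    have := hb0 |x - pos s| (abs_nonneg _)
    have := hC s
    simp only
    linarith
  have hbt : ∀ x y z : ℝ, b |x - z| ≤ b |x - y| + b |y - z| := by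
    intro x y z
    refine (hbm (Set.mem_Ici.2 (abs_nonneg _)) ?_ (abs_sub_le x y z)).trans (hbs _ _ (abs_nonneg _) (abs_nonneg _))
    simp only [Set.mem_Ici]; positivity
  refine ⟨fun x => ⨅ s, (v s + b |x - pos s|), ?_, ?_⟩
  · have key : ∀ x y, (⨅ s, (v s + b |x - pos s|)) ≤ (⨅ s, (v s + b |y - pos s|)) + b |x - y| := by
      intro x y
      rw [← sub_le_iff_le_add]
      apply le_ciInf
      intro s
      have := ciInf_le (hbdd x) s
      have := hbt x y (pos s)
      linarith
    intro x y
    rw [abs_le]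
    have h1 := key x y
    have h2 := key y x
    rw [abs_sub_comm y x] at h2
    constructor <;> linarith
  · intro s
    apply le_antisymm
    · have := ciInf_le (hbdd (pos s)) s
      simpa [hbz] using this
    · apply le_ciInf
      intro t
      have := hv s t
      linarith

def nn (j : ℕ) : ℕ := 2 ^ ((j + 2) ^ 2)
def dl (j : ℕ) : ℝ := if j = 0 then 1 / 32 else (1 / 2) ^ ((j + 3) ^ 2)

lemma dl_pos (j : ℕ) : 0 < dl j := by unfold dl; split_ifs <;> positivity

lemma nn_dl (j : ℕ) : (nn j : ℝ) * dl j ≤ 1 / 2 * (1 / 4) ^ j := by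
  unfold nn dl
  split_ifs with h
  · subst h; norm_num
  · have e : (j + 3) ^ 2 = (j + 2) ^ 2 + (2 * j + 5) := by ring
    rw [e, pow_add, ← mul_assoc]
    push_cast
    rw [← mul_pow, pow_add, pow_mul]
    norm_num
    have : (0:ℝ) < (1 / 4) ^ j := by positivity
    linarith

lemma nn_ge (j : ℕ) : 16 ≤ nn j := by
  unfold nn
  calc 16 = 2 ^ 4 := by norm_num
    _ ≤ _ := Nat.pow_le_pow_right (by norm_num) (by nlinarith [Nat.zero_le j])

lemma dl_anti : Antitone dl := by
  apply antitone_nat_of_succ_le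
  intro j
  unfold dl
  rw [if_neg (by omega)]
  split_ifs with h
  · subst h; norm_num
  · exact pow_le_pow_of_le_one (by norm_num) (by norm_num) (by gcongr; omega)

def ps (j i : ℕ) (c : Bool) : ℝ :=
  1 - (1 / 4) ^ j + i * (5 / 4) * dl j + if c then dl j else 0

def vl (A : ℕ → ℝ) (j i : ℕ) (c : Bool) : ℝ := (-1) ^ i * (if c then - A j else A j)

lemma ps_lower (j i : ℕ) (c : Bool) : 1 - (1 / 4) ^ j ≤ ps j i c := by
  unfold ps
  have := dl_pos j
  have : 0 ≤ (i : ℝ) * (5 / 4) * dl j := by positivity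
  split_ifs <;> linarith

lemma ps_upper (j i : ℕ) (hi : i < nn j) (c : Bool) :
    ps j i c + dl j ≤ 1 - (1 / 4) ^ (j + 1) := by
  unfold ps
  have h0 := dl_pos j
  have h1 := nn_dl j
  have h2 : (16 : ℝ) ≤ nn j := by exact_mod_cast nn_ge j
  have h3 : (i : ℝ) + 1 ≤ nn j := by exact_mod_cast hi
  have h4 : ((i : ℝ) + 1) * dl j ≤ nn j * dl j := by gcongr
  have h5 : 16 * dl j ≤ nn j * dl j := by gcongr
  have : (0:ℝ) < (1 / 4) ^ j := by positivity
  rw [pow_succ]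
  split_ifs <;> nlinarith

lemma ps_block (j j' i i' : ℕ) (hi : i < nn j) (c c' : Bool) (h : j < j') :
    ps j i c + dl j ≤ ps j' i' c' := by
  refine (ps_upper j i hi c).trans (le_trans ?_ (ps_lower j' i' c'))
  have : ((1:ℝ) / 4) ^ j' ≤ (1 / 4) ^ (j + 1) :=
    pow_le_pow_of_le_one (by norm_num) (by norm_num) h
  linarith

lemma vl_abs (A : ℕ → ℝ) (hA : ∀ j, 0 ≤ A j) (j i : ℕ) (c : Bool) : |vl A j i c| = A j := by
  unfold vl
  rw [abs_mul, abs_pow]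
  split_ifs <;> simp [abs_of_nonneg (hA j)]

/-- Within a block: values agree or the points are far apart. -/
lemma same_block (A : ℕ → ℝ) (j i i' : ℕ) (c c' : Bool) (h : i ≤ i') :
    vl A j i c = vl A j i' c' ∨ dl j ≤ |ps j i c - ps j i' c'| := by
  have h0 := dl_pos j
  rcases h.eq_or_lt with rfl | h
  · cases c <;> cases c' <;> simp [ps, abs_of_pos h0]
  by_cases hc : c = true ∧ c' = false ∧ i' = i + 1
  · obtain ⟨rfl, rfl, rfl⟩ := hc
    left
    simp [vl, pow_succ]
  · right
    rw [abs_sub_comm]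
    refine le_trans ?_ (le_abs_self _)
    unfold ps
    have h1 : (i : ℝ) + 1 ≤ i' := by exact_mod_cast h
    have h2 : ((i : ℝ) + 1) * dl j ≤ i' * dl j := by gcongr
    cases c <;> cases c'
    · simp; nlinarith
    · simp; nlinarith
    · have h3 : i + 2 ≤ i' := by
        simp at hc; omega
      have h3 : (i : ℝ) + 2 ≤ i' := by exact_mod_cast h3
      have h2 : ((i : ℝ) + 2) * dl j ≤ i' * dl j := by gcongr
      simp; nlinarith
    · simp; nlinarith

lemma oneD (b : ℝ → ℝ) (hb0 : ∀ s, 0 ≤ s → 0 ≤ b s)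
    (hbm : MonotoneOn b (Set.Ici 0)) (hbs : ∀ s t : ℝ, 0 ≤ s → 0 ≤ t → b (s + t) ≤ b s + b t)
    (hbz : b 0 = 0) :
    ∃ g : ℝ → ℝ, (∀ x y, |g x - g y| ≤ b |x - y|) ∧
      ∀ j, ∃ l r s : ℕ → ℝ, (∀ i < nn j, 0 ≤ l i ∧ l i < r i ∧ r i ≤ 1 ∧ (s i = 1 ∨ s i = -1) ∧
        s i * g (l i) = b (dl j) / 2 ∧ s i * g (r i) = - (b (dl j) / 2)) ∧
        ∀ i i', i < i' → r i < l i' := by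
  set A : ℕ → ℝ := fun j => b (dl j) / 2 with hAdef
  have hA : ∀ j, 0 ≤ A j := fun j => by
    have := hb0 _ (dl_pos j).le
    simp only [hAdef]; linarith
  have hAm : ∀ j j', j ≤ j' → A j' ≤ A j := by
    intro j j' h
    have := hbm (dl_pos j').le (dl_pos j).le (dl_anti h)
    simp only [hAdef]; linarith
  let S := {q : ℕ × ℕ × Bool // q.2.1 < nn q.1}
  have : Nonempty S := ⟨⟨(0, 0, true), by have := nn_ge 0; simp only; omega⟩⟩
  have far : ∀ (j j' i i' : ℕ) (c c' : Bool), j ≤ j' → dl j ≤ |ps j i c - ps j' i' c'| →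
      |vl A j i c - vl A j' i' c'| ≤ b |ps j i c - ps j' i' c'| := by
    intro j j' i i' c c' hj h
    have h1 := hbm (dl_pos j).le (Set.mem_Ici.2 (abs_nonneg _)) h
    have h2 := abs_sub (vl A j i c) (vl A j' i' c')
    rw [vl_abs A hA, vl_abs A hA] at h2
    have h3 := hAm j j' hj
    have h4 : A j + A j = b (dl j) := by simp only [hAdef]; ring
    linarith
  have hle : ∀ (j j' i i' : ℕ) (c c' : Bool), i < nn j → i' < nn j' → j ≤ j' →
      |vl A j i c - vl A j' i' c'| ≤ b |ps j i c - ps j' i' c'| := by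
    intro j j' i i' c c' hi hi' hj
    rcases hj.eq_or_lt with rfl | hj'
    · have : vl A j i c = vl A j i' c' ∨ dl j ≤ |ps j i c - ps j i' c'| := by
        rcases le_total i i' with h | h
        · exact same_block A j i i' c c' h
        · rw [abs_sub_comm, eq_comm]
          exact same_block A j i' i c' c h
      rcases this with h | h
      · rw [h, sub_self, abs_zero]; exact hb0 _ (abs_nonneg _)
      · exact far _ _ _ _ _ _ le_rfl h
    · apply far _ _ _ _ _ _ hj
      have := ps_block j j' i i' hi c c' hj'
      rw [abs_sub_comm]
      refine le_trans ?_ (le_abs_self _)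
      linarith
  obtain ⟨g, hg, hgv⟩ := mcshane (S := S) b hb0 hbm hbs hbz (fun q => ps q.1.1 q.1.2.1 q.1.2.2)
    (fun q => vl A q.1.1 q.1.2.1 q.1.2.2) (- A 0) (by
      rintro ⟨⟨j, i, c⟩, hi⟩
      have h1 := vl_abs A hA j i c
      have h2 := hAm 0 j (Nat.zero_le _)
      have h3 := neg_abs_le (vl A j i c)
      simp only; linarith) (by
      rintro ⟨⟨j, i, c⟩, hi⟩ ⟨⟨j', i', c'⟩, hi'⟩
      simp only at hi hi' ⊢
      refine (le_abs_self _).trans ?_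
      rcases le_total j j' with h | h
      · exact hle _ _ _ _ _ _ hi hi' h
      · rw [abs_sub_comm, abs_sub_comm (ps j i c)]
        exact hle _ _ _ _ _ _ hi' hi h)
  refine ⟨g, hg, fun j => ⟨fun i => ps j i false, fun i => ps j i true, fun i => (-1) ^ i, ?_, ?_⟩⟩
  · intro i hi
    have h0 := dl_pos j
    have hq : ∀ n : ℕ, (0:ℝ) < (1 / 4) ^ n := fun n => by positivity
    have e1 : g (ps j i false) = (-1) ^ i * A j := by
      have := hgv ⟨(j, i, false), hi⟩
      simpa [vl] using this
    have e2 : g (ps j i true) = - ((-1) ^ i * A j) := by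
      have := hgv ⟨(j, i, true), hi⟩
      simpa [vl] using this
    have e3 : ((-1 : ℝ) ^ i) * (-1) ^ i = 1 := by
      rw [← mul_pow]; simp
    refine ⟨?_, ?_, ?_, neg_one_pow_eq_or ℝ i, ?_, ?_⟩
    · have := ps_lower j i false
      have h2 : ((1:ℝ) / 4) ^ j ≤ 1 := pow_le_one₀ (by norm_num) (by norm_num)
      linarith
    · simp [ps, h0]
    · have := ps_upper j i hi true
      have := hq (j + 1)
      linarith
    · rw [e1]; linear_combination (A j) * e3
    · rw [e2]; linear_combination (-A j) * e3
  · intro i i' h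
    have h0 := dl_pos j
    have h1 : (i : ℝ) + 1 ≤ i' := by exact_mod_cast h
    have h2 : ((i : ℝ) + 1) * dl j ≤ i' * dl j := by gcongr
    simp only [ps]
    simp
    nlinarith

lemma bound_aux (j : ℕ) (P : ℝ) (hP : 0 < P) (h : (1 / 2 : ℝ) ^ ((j + 4) ^ 2) ≤ P) :
    16 / P * (2 : ℝ) ^ (-4 * Real.sqrt |Real.logb 2 P|) ≤ nn j := by
  set t := - Real.logb 2 P with ht
  have hPt : P = (2 : ℝ) ^ (-t) := by
    rw [ht, neg_neg, Real.rpow_logb (by norm_num) (by norm_num) hP]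
  have hlog : |Real.logb 2 P| = |t| := by rw [ht, abs_neg]
  have ht2 : t ≤ ((j : ℝ) + 4) ^ 2 := by
    have := Real.logb_le_logb_of_le (b := 2) (by norm_num) (by positivity) h
    rw [Real.logb_pow, one_div, Real.logb_inv, Real.logb_self_eq_one (by norm_num)] at this
    push_cast at this
    linarith
  have e : 16 / P * (2 : ℝ) ^ (-4 * Real.sqrt |Real.logb 2 P|)
      = (2 : ℝ) ^ (4 + t - 4 * Real.sqrt |t|) := by
    have h16 : (16 : ℝ) = (2 : ℝ) ^ (4 : ℝ) := by norm_num
    rw [hlog, hPt, h16, ← Real.rpow_sub (by norm_num), ← Real.rpow_add (by norm_num)]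
    congr 1; ring
  have e2 : (nn j : ℝ) = (2 : ℝ) ^ (((j : ℝ) + 2) ^ 2) := by
    unfold nn
    rw [show ((j : ℝ) + 2) ^ 2 = (((j + 2) ^ 2 : ℕ) : ℝ) by push_cast; ring, Real.rpow_natCast]
    push_cast; ring
  rw [e, e2]
  apply Real.rpow_le_rpow_of_exponent_le (by norm_num)
  have hj : (0 : ℝ) ≤ j := Nat.cast_nonneg j
  have hs := Real.sqrt_nonneg |t|
  rcases lt_or_ge t 0 with h0 | h0
  · nlinarith
  · rw [abs_of_nonneg h0] at *
    have h1 := Real.sq_sqrt h0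
    have h2 : Real.sqrt t ≤ j + 4 := Real.sqrt_le_iff.2 ⟨by linarith, ht2⟩
    nlinarith

lemma box_meas (d k : ℕ) (hk : k ≤ d) (H : EuclideanSpace ℝ (Fin d) → Fin k → ℝ)
    (hH : ContinuousOn H (unitCube d)) (l r s : Fin k → ℝ) (hl : ∀ q, 0 ≤ l q)
    (hlr : ∀ q, l q < r q) (hr : ∀ q, r q ≤ 1) (hs : ∀ q, s q = 1 ∨ s q = -1)
    (h0 : ∀ x ∈ unitCube d, ∀ q, x (Fin.castLE hk q) = l q → 0 ≤ s q * H x q)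
    (h1 : ∀ x ∈ unitCube d, ∀ q, x (Fin.castLE hk q) = r q → s q * H x q ≤ 0) :
    1 ≤ μH[((d - k : ℕ) : ℝ)] {x ∈ unitCube d |
      (∀ q, x (Fin.castLE hk q) ∈ Set.Icc (l q) (r q)) ∧ H x = 0} := by
  set S := {x ∈ unitCube d |
      (∀ q, x (Fin.castLE hk q) ∈ Set.Icc (l q) (r q)) ∧ H x = 0} with hS
  let π : EuclideanSpace ℝ (Fin d) → (Fin (d - k) → ℝ) :=
    fun x i => x ⟨k + i, by omega⟩
  have hπ : LipschitzWith 1 π := by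
    apply LipschitzWith.of_dist_le_mul
    intro x y
    rw [NNReal.coe_one, one_mul, dist_pi_le_iff dist_nonneg]
    intro i
    have := PiLp.norm_apply_le (x - y) (⟨k + i, by omega⟩ : Fin d)
    rw [dist_eq_norm, dist_eq_norm]
    exact this
  have hsub : Set.Icc (0 : Fin (d - k) → ℝ) 1 ⊆ π '' S := by
    intro z hz
    let E : (Fin k → ℝ) → EuclideanSpace ℝ (Fin d) := fun u => WithLp.toLp 2 fun i =>
      if hi : (i : ℕ) < k then l ⟨i, hi⟩ + u ⟨i, hi⟩ * (r ⟨i, hi⟩ - l ⟨i, hi⟩)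
      else z ⟨i - k, by omega⟩
    have hE : Continuous E := by
      apply (PiLp.continuous_toLp 2 _).comp
      refine continuous_pi fun i => ?_
      by_cases hi : (i : ℕ) < k
      · simp only [hi, dite_true]; fun_prop
      · simp only [hi, dite_false]; fun_prop
    have hE1 : ∀ u (q : Fin k), E u (Fin.castLE hk q) = l q + u q * (r q - l q) := by
      intro u q
      simp [E]
    have hE2 : ∀ u (i : Fin (d - k)), E u ⟨k + i, by omega⟩ = z i := by
      intro u i
      simp [E]
    have hrange : ∀ u ∈ Set.Icc (0 : Fin k → ℝ) 1, ∀ q,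
        l q + u q * (r q - l q) ∈ Set.Icc (l q) (r q) := by
      intro u hu q
      have a1 : 0 ≤ u q := hu.1 q
      have a2 : u q ≤ 1 := hu.2 q
      have a3 := hlr q
      constructor <;> nlinarith
    have hEc : ∀ u ∈ Set.Icc (0 : Fin k → ℝ) 1, E u ∈ unitCube d := by
      intro u hu i
      by_cases hi : (i : ℕ) < k
      · have b1 := hE1 u ⟨i, hi⟩
        have b2 := hrange u hu ⟨i, hi⟩
        have b3 : Fin.castLE hk ⟨i, hi⟩ = i := rfl
        rw [b3] at b1
        rw [b1]
        exact ⟨(hl _).trans b2.1, b2.2.trans (hr _)⟩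
      · have : E u i = z ⟨i - k, by omega⟩ := by simp [E, hi]
        rw [this]
        exact ⟨hz.1 _, hz.2 _⟩
    obtain ⟨u, hu, hu0⟩ := miranda (fun u q => s q * H (E u) q) (by
      rw [continuousOn_pi]
      intro q
      apply ContinuousOn.mul continuousOn_const
      have := hH.comp hE.continuousOn hEc
      exact (continuousOn_pi.1 this) q) (by
      intro u hu q hq
      exact h0 _ (hEc u hu) q (by rw [hE1, hq]; ring)) (by
      intro u hu q hq
      exact h1 _ (hEc u hu) q (by rw [hE1, hq]; ring))
    refine ⟨E u, ⟨hEc u hu, fun q => by rw [hE1]; exact hrange u hu q, ?_⟩, ?_⟩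
    · funext q
      have := congrFun hu0 q
      simp only [Pi.zero_apply] at this ⊢
      rcases hs q with h | h <;> rw [h] at this <;> linarith
    · funext i
      exact hE2 u i
  have hv : (1 : ℝ≥0∞) = μH[((d - k : ℕ) : ℝ)] (Set.Icc (0 : Fin (d - k) → ℝ) 1) := by
    have := hausdorffMeasure_pi_real (ι := Fin (d - k))
    rw [Fintype.card_fin] at this
    rw [this, Real.volume_Icc_pi]
    simp
  calc (1 : ℝ≥0∞) = _ := hv
    _ ≤ μH[((d - k : ℕ) : ℝ)] (π '' S) := measure_mono hsub
    _ ≤ _ := by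
      have := hπ.hausdorffMeasure_image_le (d := ((d - k : ℕ) : ℝ)) (by positivity) S
      simpa using this

lemma isClosed_unitCube (d : ℕ) : IsClosed (unitCube d) := by
  have : unitCube d = ⋂ i, {x | x i ∈ Set.Icc (0 : ℝ) 1} := by
    ext x; simp [unitCube]
  rw [this]
  refine isClosed_iInter fun i => ?_
  exact isClosed_Icc.preimage (by fun_prop : Continuous fun x : EuclideanSpace ℝ (Fin d) => x i)

lemma count_meas (d k : ℕ) (hk : k ≤ d) (H : EuclideanSpace ℝ (Fin d) → Fin k → ℝ)
    (hH : ContinuousOn H (unitCube d)) (n : ℕ) (l r s : ℕ → ℝ)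
    (hlr : ∀ i < n, 0 ≤ l i ∧ l i < r i ∧ r i ≤ 1 ∧ (s i = 1 ∨ s i = -1))
    (hdisj : ∀ i i', i < i' → r i < l i')
    (h0 : ∀ x ∈ unitCube d, ∀ q, ∀ i < n, x (Fin.castLE hk q) = l i → 0 ≤ s i * H x q)
    (h1 : ∀ x ∈ unitCube d, ∀ q, ∀ i < n, x (Fin.castLE hk q) = r i → s i * H x q ≤ 0) :
    (n : ℝ≥0∞) ^ k ≤ μH[((d - k : ℕ) : ℝ)] {x ∈ unitCube d | H x = 0} := by
  let B : (Fin k → Fin n) → Set (EuclideanSpace ℝ (Fin d)) := fun ι => {x ∈ unitCube d |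
      (∀ q, x (Fin.castLE hk q) ∈ Set.Icc (l (ι q)) (r (ι q))) ∧ H x = 0}
  have hB : ∀ ι, 1 ≤ μH[((d - k : ℕ) : ℝ)] (B ι) := by
    intro ι
    exact box_meas d k hk H hH (fun q => l (ι q)) (fun q => r (ι q)) (fun q => s (ι q))
      (fun q => (hlr _ (ι q).2).1) (fun q => (hlr _ (ι q).2).2.1) (fun q => (hlr _ (ι q).2).2.2.1)
      (fun q => (hlr _ (ι q).2).2.2.2) (fun x hx q => h0 x hx q _ (ι q).2)
      (fun x hx q => h1 x hx q _ (ι q).2)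
  have hBm : ∀ ι, MeasurableSet (B ι) := by
    intro ι
    have e : B ι = (unitCube d ∩ H ⁻¹' {0}) ∩
        ⋂ q, (fun x : EuclideanSpace ℝ (Fin d) => x (Fin.castLE hk q)) ⁻¹'
          Set.Icc (l (ι q)) (r (ι q)) := by
      ext x
      simp only [B, Set.mem_ofPred_eq, Set.mem_inter_iff, Set.mem_preimage, Set.mem_iInter,
        Set.mem_singleton_iff]
      tauto
    rw [e]
    apply IsClosed.measurableSet
    refine (hH.preimage_isClosed_of_isClosed (isClosed_unitCube d) isClosed_singleton).inter ?_
    refine isClosed_iInter fun q => ?_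
    exact isClosed_Icc.preimage (by fun_prop)
  have hd : Pairwise (Function.onFun Disjoint B) := by
    intro ι ι' hne
    rw [Function.onFun, Set.disjoint_left]
    rintro x ⟨_, hx, _⟩ ⟨_, hx', _⟩
    apply hne
    funext q
    have a := hx q
    have a' := hx' q
    by_contra hq
    rcases lt_or_gt_of_ne (fun h => hq (Fin.ext h) : (ι q : ℕ) ≠ ι' q) with h | h
    · have := hdisj _ _ h
      linarith [a.2, a'.1]
    · have := hdisj _ _ h
      linarith [a.1, a'.2]
  calc (n : ℝ≥0∞) ^ k = ∑ ι : Fin k → Fin n, (1 : ℝ≥0∞) := by simp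
    _ ≤ ∑ ι : Fin k → Fin n, μH[((d - k : ℕ) : ℝ)] (B ι) := Finset.sum_le_sum fun ι _ => hB ι
    _ = μH[((d - k : ℕ) : ℝ)] (⋃ ι, B ι) := by
      rw [measure_iUnion hd hBm, tsum_fintype]
    _ ≤ _ := by
      apply measure_mono
      apply Set.iUnion_subset
      rintro ι x ⟨hx, _, hx'⟩
      exact ⟨hx, hx'⟩

/-- for `W = [-r₀,r₀]^p × {0}^{m-p}` and any modulus of continuity `β`,
there is a continuous `g : [0,1]^d → ℝ^m` admitting `β` as a modulus of continuity such
that for every `0 < ε ≤ min{(1/(2√(m-p)))·β(2⁻⁵), r₀}`,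
`N^g_W(ε) ≥ (16/Ψ_β(2√(m-p) ε))^{m-p} · 2^{-4(m-p)·√|log₂ Ψ_β(2√(m-p) ε)|}`. -/
theorem stmt3 (d m p : ℕ) (hpm : p < m) (hmd : m ≤ p + d)
    (r₀ : ℝ) (hr₀ : 0 < r₀)
    (β : ℝ → ℝ) (hβ : IsModulus β) :
    ∃ g : EuclideanSpace ℝ (Fin d) → EuclideanSpace ℝ (Fin m),
      ContinuousOn g (unitCube d) ∧
      (∀ x ∈ unitCube d, ∀ y ∈ unitCube d, dist (g x) (g y) ≤ β (dist x y)) ∧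
      ∀ ε : ℝ, 0 < ε →
        ε ≤ min ((1 / (2 * Real.sqrt ((m : ℝ) - p))) * β (2 ^ (-5 : ℤ))) r₀ →
        ENNReal.ofReal ((16 / Psi β (2 * Real.sqrt ((m : ℝ) - p) * ε)) ^ (m - p) *
            2 ^ (-(4 * ((m : ℝ) - p)) *
              Real.sqrt |Real.logb 2 (Psi β (2 * Real.sqrt ((m : ℝ) - p) * ε))|))
          ≤ NW d m ((d : ℝ) + p - m) (boxSlice m p r₀) g ε := by
  obtain ⟨hβ0, hβm, hβs, hβz, hβt⟩ := hβ
  obtain ⟨k, rfl⟩ : ∃ k, m = p + k := ⟨m - p, by omega⟩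
  have hk : 0 < k := by omega
  have hkd : k ≤ d := by omega
  have hkr : (((p + k : ℕ) : ℝ) - p) = k := by push_cast; ring
  have hkn : p + k - p = k := by omega
  have hdim : (d : ℝ) + p - ((p + k : ℕ) : ℝ) = ((d - k : ℕ) : ℝ) := by
    rw [Nat.cast_sub hkd]; push_cast; ring
  rw [hkr, hkn, hdim]
  set c := Real.sqrt (k : ℝ) with hc
  have hk' : (0 : ℝ) < k := by exact_mod_cast hk
  have hcp : 0 < c := Real.sqrt_pos.2 hk'
  have hcc : c ^ 2 = k := Real.sq_sqrt hk'.le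
  obtain ⟨g1, hg1, hg1b⟩ := oneD (fun s => β s / c) (fun s hs => div_nonneg (hβ0 s hs) hcp.le)
    (fun s hs t ht hst => div_le_div_of_nonneg_right (hβm hs ht hst) hcp.le)
    (fun s t hs ht => by
      rw [← add_div]; exact div_le_div_of_nonneg_right (hβs s t hs ht) hcp.le)
    (by simp [hβz])
  let g : EuclideanSpace ℝ (Fin d) → EuclideanSpace ℝ (Fin (p + k)) := fun x =>
    WithLp.toLp 2 fun i => if (i : ℕ) < p then 0 else g1 (x ⟨i - p, by omega⟩)
  have hmod : ∀ x y, dist (g x) (g y) ≤ β (dist x y) := by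
    intro x y
    have hb := hβ0 (dist x y) dist_nonneg
    rw [EuclideanSpace.dist_eq]
    apply Real.sqrt_le_iff.2 ⟨hb, ?_⟩
    rw [Fin.sum_univ_add]
    have e1 : ∀ i : Fin p, dist (g x (Fin.castAdd k i)) (g y (Fin.castAdd k i)) ^ 2 = 0 := by
      intro i; simp [g]
    have e2 : ∀ i : Fin k, dist (g x (Fin.natAdd p i)) (g y (Fin.natAdd p i)) ^ 2
        ≤ (β (dist x y) / c) ^ 2 := by
      intro i
      have hi : (i : ℕ) < d := by omega
      have : dist (g x (Fin.natAdd p i)) (g y (Fin.natAdd p i))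
          = |g1 (x ⟨i, hi⟩) - g1 (y ⟨i, hi⟩)| := by
        simp [g, Real.dist_eq]
      rw [this]
      have h2 : |x ⟨i, hi⟩ - y ⟨i, hi⟩| ≤ dist x y := by
        have := PiLp.norm_apply_le (x - y) (⟨i, hi⟩ : Fin d)
        rw [dist_eq_norm]
        exact this
      have h3 := hβm (Set.mem_Ici.2 (abs_nonneg _)) (Set.mem_Ici.2 dist_nonneg) h2
      gcongr
      exact (hg1 _ _).trans (div_le_div_of_nonneg_right h3 hcp.le)
    calc _ ≤ ∑ i : Fin p, (0 : ℝ) + ∑ i : Fin k, (β (dist x y) / c) ^ 2 := by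
          apply add_le_add
          · exact Finset.sum_le_sum fun i _ => (e1 i).le
          · exact Finset.sum_le_sum fun i _ => e2 i
      _ = β (dist x y) ^ 2 := by
          simp only [Finset.sum_const, Finset.card_univ, Fintype.card_fin, smul_zero, zero_add,
            nsmul_eq_mul]
          rw [div_pow, hcc]
          field_simp
  have hcont : Continuous g := by
    rw [Metric.continuous_iff]
    intro y ε hε
    have := (Metric.tendsto_nhdsWithin_nhds.1 hβt) ε hε
    obtain ⟨δ, hδ, h⟩ := this
    refine ⟨δ, hδ, fun x hx => ?_⟩
    refine (hmod x y).trans_lt ?_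
    rcases (dist_nonneg (x := x) (y := y)).eq_or_lt with h0 | h0
    · rw [← h0, hβz]; exact hε
    · have := h h0 (by rwa [Real.dist_eq, sub_zero, abs_of_pos h0])
      rw [Real.dist_eq, sub_zero] at this
      exact (le_abs_self _).trans_lt this
  refine ⟨g, hcont.continuousOn, fun x _ y _ => hmod x y, ?_⟩
  intro ε hε hεle
  have hεr : ε ≤ r₀ := hεle.trans (min_le_right _ _)
  have hεβ : 2 * c * ε ≤ β (1 / 32) := by
    have h1 := hεle.trans (min_le_left _ _)
    rw [show ((2 : ℝ) ^ (-5 : ℤ)) = 1 / 32 by norm_num] at h1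
    calc 2 * c * ε ≤ 2 * c * (1 / (2 * c) * β (1 / 32)) := by gcongr
      _ = β (1 / 32) := by field_simp
  set P := Psi β (2 * c * ε) with hPdef
  have hcε : 0 < 2 * c * ε := by positivity
  have hPnn : 0 ≤ P := Real.sSup_nonneg fun x hx => hx.1
  rcases hPnn.eq_or_lt with hP0 | hP
  · rw [← hP0]
    simp [hk.ne']
  have hbdd : BddAbove {δ : ℝ | 0 ≤ δ ∧ β δ ≤ 2 * c * ε} := by
    by_contra hnb
    have : P = 0 := Real.sSup_of_not_bddAbove hnb
    linarith
  have hgt : ∀ δ, P < δ → 2 * c * ε < β δ := by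
    intro δ hδ
    by_contra hle
    have : δ ≤ P := le_csSup hbdd ⟨(hP.trans hδ).le, not_lt.1 hle⟩
    linarith
  have hex : ∃ j : ℕ, (1 / 2 : ℝ) ^ ((j + 4) ^ 2) ≤ P := by
    obtain ⟨n, hn⟩ := exists_pow_lt_of_lt_one hP (by norm_num : (1 / 2 : ℝ) < 1)
    refine ⟨n, le_trans ?_ hn.le⟩
    exact pow_le_pow_of_le_one (by norm_num) (by norm_num) (by nlinarith)
  classical
  obtain ⟨j, hj, hjβ⟩ : ∃ j : ℕ, (1 / 2 : ℝ) ^ ((j + 4) ^ 2) ≤ P ∧ 2 * c * ε ≤ β (dl j) := by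
    refine ⟨Nat.find hex, Nat.find_spec hex, ?_⟩
    rcases Nat.eq_zero_or_pos (Nat.find hex) with h | h
    · rw [h]; simpa [dl] using hεβ
    · have h1 := Nat.find_min hex (m := Nat.find hex - 1) (by omega)
      rw [show Nat.find hex - 1 + 4 = Nat.find hex + 3 by omega] at h1
      have h2 := hgt _ (not_le.1 h1)
      unfold dl
      rw [if_neg h.ne']
      exact h2.le
  have hbnd := bound_aux j P hP hj
  obtain ⟨l, r, s, hlrs, hdisj⟩ := hg1b j
  have hεb : ε ≤ β (dl j) / c / 2 := by
    rw [le_div_iff₀ (by norm_num), le_div_iff₀ hcp]; linarith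
  have hLHS : ENNReal.ofReal ((16 / P) ^ k * 2 ^ (-(4 * (k : ℝ)) * Real.sqrt |Real.logb 2 P|))
      ≤ (nn j : ℝ≥0∞) ^ k := by
    have e : (16 / P) ^ k * (2 : ℝ) ^ (-(4 * (k : ℝ)) * Real.sqrt |Real.logb 2 P|)
        = (16 / P * (2 : ℝ) ^ (-4 * Real.sqrt |Real.logb 2 P|)) ^ k := by
      rw [mul_pow, ← Real.rpow_natCast ((2 : ℝ) ^ _) k, ← Real.rpow_mul (by norm_num)]
      congr 2; ring
    rw [e]
    have : (nn j : ℝ≥0∞) ^ k = ENNReal.ofReal ((nn j : ℝ) ^ k) := by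
      rw [ENNReal.ofReal_pow (by positivity), ENNReal.ofReal_natCast]
    rw [this]
    apply ENNReal.ofReal_le_ofReal
    exact pow_le_pow_left₀ (by positivity) hbnd k
  refine hLHS.trans ?_
  unfold NW
  refine le_iInf fun h => le_iInf fun hh => le_iInf fun hd => ?_
  have hcoord : ∀ x ∈ unitCube d, ∀ i, |h x i - g x i| ≤ ε := by
    intro x hx i
    have := PiLp.norm_apply_le (h x - g x) i
    refine le_trans this ?_
    rw [← dist_eq_norm]
    exact hd x hx
  have hgq : ∀ x (q : Fin k), g x (Fin.natAdd p q) = g1 (x (Fin.castLE hkd q)) := by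
    intro x q
    simp [g, Fin.castLE]
  have main := count_meas d k hkd (fun x q => h x (Fin.natAdd p q)) (by
      rw [continuousOn_pi]
      intro q
      exact (by fun_prop : Continuous fun y : EuclideanSpace ℝ (Fin (p + k)) =>
        y (Fin.natAdd p q)).comp_continuousOn hh) (nn j) l r s
      (fun i hi => ⟨(hlrs i hi).1, (hlrs i hi).2.1, (hlrs i hi).2.2.1, (hlrs i hi).2.2.2.1⟩)
      hdisj (by
      intro x hx q i hi hxl
      have h1 := abs_le.1 (hcoord x hx (Fin.natAdd p q))
      rw [hgq, hxl] at h1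
      have h2 := (hlrs i hi).2.2.2.2.1
      rcases (hlrs i hi).2.2.2.1 with hs | hs <;> rw [hs] at h2 ⊢ <;> linarith [h1.1, h1.2]) (by
      intro x hx q i hi hxl
      have h1 := abs_le.1 (hcoord x hx (Fin.natAdd p q))
      rw [hgq, hxl] at h1
      have h2 := (hlrs i hi).2.2.2.2.2
      rcases (hlrs i hi).2.2.2.1 with hs | hs <;> rw [hs] at h2 ⊢ <;> linarith [h1.1, h1.2])
  refine main.trans (measure_mono ?_)
  rintro x ⟨hx, hx0⟩
  refine ⟨hx, fun i => ⟨fun hi => ?_, fun hi => ?_⟩⟩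
  · have h1 := hcoord x hx i
    have : g x i = 0 := by simp [g, hi]
    rw [this, sub_zero] at h1
    exact h1.trans hεr
  · have := congrFun hx0 ⟨i - p, by omega⟩
    have e : Fin.natAdd p (⟨i - p, by omega⟩ : Fin k) = i := by
      apply Fin.ext; simp; omega
    simp only [Pi.zero_apply] at this
    rwa [e] at this
end
end

section
/- There is no pair (f, C) with f : [0,1] → ℝ continuous admitting β(s) = s as a modulus of continuity (i.e. f is 1-Lipschitz) and C ∈ (0,1] a constant, such that N^f_{{0}}(ε) ≥ C/ε for all sufficiently small ε > 0. Equivalently: for every 1-Lipschitz f : [0,1] → ℝ and every C ∈ (0,1], there exist arbitrarily small ε > 0 with N^f_{{0}}(ε) < C/ε. -/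
open MeasureTheory ENNReal

noncomputable section

/-- `N^f_{{0}}(ε)`: the infimum of the number of zeros (0-dimensional Hausdorff measure,
i.e. counting measure) over all continuous `h : [0,1] → ℝ` with `‖h - f‖_{C⁰} ≤ ε`. -/
def N0 (f : ℝ → ℝ) (ε : ℝ) : ℝ≥0∞ :=
  ⨅ (h : ℝ → ℝ) (_ : ContinuousOn h (Set.Icc 0 1))
    (_ : ∀ x ∈ Set.Icc (0 : ℝ) 1, |h x - f x| ≤ ε),
    μH[0] {x ∈ Set.Icc (0 : ℝ) 1 | h x = 0}

def cell (n k : ℕ) : Set ℝ :=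
  Set.Ico ((k : ℝ) / (n + 1)) (((k : ℝ) + 1) / (n + 1)) ∩ Set.Icc 0 1

def gsum (f : ℝ → ℝ) (n : ℕ) (y : ℝ) : ℝ≥0∞ :=
  ∑ k ∈ Finset.range (n + 2), (f '' cell n k).indicator (fun _ => (1 : ℝ≥0∞)) y

theorem cell_meas (f : ℝ → ℝ) (hf : ContinuousOn f (Set.Icc 0 1)) (n k : ℕ) :
    MeasurableSet (f '' cell n k) := by
  have h1 : IsPreconnected (cell n k) :=
    (Set.OrdConnected.inter Set.ordConnected_Ico Set.ordConnected_Icc).isPreconnected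
  have h2 := h1.image f (hf.mono Set.inter_subset_right)
  exact h2.ordConnected.measurableSet

theorem gsum_meas (f : ℝ → ℝ) (hf : ContinuousOn f (Set.Icc 0 1)) (n : ℕ) :
    Measurable (gsum f n) := by
  unfold gsum
  exact Finset.measurable_fun_sum _ fun k _ => measurable_const.indicator (cell_meas f hf n k)

theorem cell_vol (f : ℝ → ℝ)
    (hlip : ∀ x ∈ Set.Icc (0 : ℝ) 1, ∀ y ∈ Set.Icc (0 : ℝ) 1, |f x - f y| ≤ |x - y|) (n k : ℕ) :
    volume (f '' cell n k) ≤ ENNReal.ofReal (1 / (n + 1)) := by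
  refine (Real.volume_le_diam _).trans (Metric.ediam_le ?_)
  rintro _ ⟨x, hx, rfl⟩ _ ⟨y, hy, rfl⟩
  rw [edist_dist, Real.dist_eq]
  apply ENNReal.ofReal_le_ofReal
  refine (hlip x hx.2 y hy.2).trans ?_
  have h1 := hx.1.1
  have h2 := hx.1.2
  have h3 := hy.1.1
  have h4 := hy.1.2
  rw [add_div] at h2 h4
  rw [abs_le]; constructor <;> linarith

theorem gsum_int (f : ℝ → ℝ) (hf : ContinuousOn f (Set.Icc 0 1))
    (hlip : ∀ x ∈ Set.Icc (0 : ℝ) 1, ∀ y ∈ Set.Icc (0 : ℝ) 1, |f x - f y| ≤ |x - y|) (n : ℕ) :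
    ∫⁻ y, gsum f n y ≤ 2 := by
  unfold gsum
  rw [lintegral_finsetSum _ fun k _ => measurable_const.indicator (cell_meas f hf n k)]
  calc _ ≤ ∑ k ∈ Finset.range (n + 2), ENNReal.ofReal (1 / (n + 1)) := by
        apply Finset.sum_le_sum
        intro k _
        rw [lintegral_indicator (cell_meas f hf n k)]
        simpa using cell_vol f hlip n k
    _ = ENNReal.ofReal ((n + 2) * (1 / (n + 1))) := by
        rw [Finset.sum_const, Finset.card_range, nsmul_eq_mul, ENNReal.ofReal_mul (by positivity)]
        congr 1
        rw [← ENNReal.ofReal_natCast]; push_cast; rfl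
    _ ≤ 2 := by
        rw [← ENNReal.ofReal_ofNat 2]
        apply ENNReal.ofReal_le_ofReal
        rw [mul_one_div, div_le_iff₀ (by positivity)]
        have : (0 : ℝ) ≤ n := by positivity
        linarith

theorem card_le (f : ℝ → ℝ) (y : ℝ) (S : Finset ℝ)
    (hS : ∀ x ∈ S, x ∈ Set.Icc (0 : ℝ) 1 ∧ f x = y) :
    ∀ᶠ n : ℕ in Filter.atTop, (S.card : ℝ≥0∞) ≤ gsum f n y := by
  have h1 : ∀ᶠ n : ℕ in Filter.atTop, ∀ x ∈ S, ∀ x' ∈ S, x ≠ x' → 1 < |x - x'| * (n + 1) := by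
    rw [Filter.eventually_all_finset]; intro x _
    rw [Filter.eventually_all_finset]; intro x' _
    by_cases h : x = x'
    · simp [h]
    have hp : 0 < |x - x'| := abs_pos.2 (sub_ne_zero.2 h)
    obtain ⟨m, hm⟩ := exists_nat_gt (1 / |x - x'|)
    filter_upwards [Filter.eventually_ge_atTop m] with n hn _
    rw [div_lt_iff₀ hp] at hm
    have : (m : ℝ) ≤ n := by exact_mod_cast hn
    nlinarith
  filter_upwards [h1] with n hn
  have hpos : (0 : ℝ) < n + 1 := by positivity
  unfold gsum
  classical
  have hfl : ∀ x ∈ S, x ∈ cell n ⌊x * (n + 1)⌋₊ := by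
    intro x hx
    refine ⟨⟨?_, ?_⟩, (hS x hx).1⟩
    · rw [div_le_iff₀ hpos]
      exact Nat.floor_le (mul_nonneg (hS x hx).1.1 hpos.le)
    · rw [lt_div_iff₀ hpos]
      exact Nat.lt_floor_add_one _
  have hinj : Set.InjOn (fun x : ℝ => ⌊x * (n + 1)⌋₊) S := by
    intro x hx x' hx' he
    by_contra hne
    have h2 := hn x hx x' hx' hne
    have a := (hfl x hx).1
    have b := (hfl x' hx').1
    simp only at he
    rw [← he] at b
    obtain ⟨a1, a2⟩ := a
    obtain ⟨b1, b2⟩ := b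
    rw [add_div] at a2 b2
    have : |x - x'| < 1 / (n + 1) := by rw [abs_lt]; constructor <;> linarith
    rw [lt_div_iff₀ hpos] at this
    linarith
  have hsub : S.image (fun x : ℝ => ⌊x * (n + 1)⌋₊) ⊆ Finset.range (n + 2) := by
    intro k hk
    obtain ⟨x, hx, rfl⟩ := Finset.mem_image.1 hk
    rw [Finset.mem_range, Nat.floor_lt (mul_nonneg (hS x hx).1.1 hpos.le)]
    have := (hS x hx).1.2
    push_cast
    nlinarith
  calc (S.card : ℝ≥0∞) = ∑ k ∈ S.image (fun x : ℝ => ⌊x * (n + 1)⌋₊), (1 : ℝ≥0∞) := by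
        rw [Finset.sum_const, Finset.card_image_of_injOn hinj]; simp
    _ ≤ ∑ k ∈ S.image (fun x : ℝ => ⌊x * (n + 1)⌋₊),
          (f '' cell n k).indicator (fun _ => (1 : ℝ≥0∞)) y := by
        apply Finset.sum_le_sum
        intro k hk
        obtain ⟨x, hx, rfl⟩ := Finset.mem_image.1 hk
        rw [Set.indicator_of_mem]
        exact ⟨x, hfl x hx, (hS x hx).2⟩
    _ ≤ _ := Finset.sum_le_sum_of_subset hsub

theorem fiber_le (f : ℝ → ℝ) (y : ℝ) :
    μH[0] {x ∈ Set.Icc (0 : ℝ) 1 | f x = y} ≤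
      Filter.liminf (fun n => gsum f n y) Filter.atTop := by
  have key : ∀ S : Finset ℝ, (∀ x ∈ S, x ∈ Set.Icc (0 : ℝ) 1 ∧ f x = y) →
      (S.card : ℝ≥0∞) ≤ Filter.liminf (fun n => gsum f n y) Filter.atTop := fun S hS =>
    Filter.le_liminf_of_le (by isBoundedDefault) (card_le f y S hS)
  rcases Set.finite_or_infinite {x ∈ Set.Icc (0 : ℝ) 1 | f x = y} with hfin | hinf
  · refine le_trans ?_ (key hfin.toFinset fun x hx => by simpa using hx)
    have h : {x ∈ Set.Icc (0 : ℝ) 1 | f x = y} = ⋃ x ∈ hfin.toFinset, {x} := by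
      ext x; simp
    conv_lhs => rw [h]
    refine (measure_biUnion_finset_le _ _).trans ?_
    simp [Measure.hausdorffMeasure_zero_singleton]
  · have : Filter.liminf (fun n => gsum f n y) Filter.atTop = ⊤ := by
      refine ENNReal.eq_top_of_forall_nnreal_le fun r => ?_
      obtain ⟨m, hm⟩ := exists_nat_ge r
      obtain ⟨S, hS, hc⟩ := hinf.exists_subset_card_eq m
      refine le_trans ?_ (key S fun x hx => hS hx)
      rw [hc]; exact_mod_cast hm
    rw [this]; exact le_top

theorem stmt5 (f : ℝ → ℝ) (hf : ContinuousOn f (Set.Icc 0 1))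
    (hlip : ∀ x ∈ Set.Icc (0 : ℝ) 1, ∀ y ∈ Set.Icc (0 : ℝ) 1, |f x - f y| ≤ |x - y|)
    (C : ℝ) (hC0 : 0 < C) (hC1 : C ≤ 1) :
    ∀ ε₀ : ℝ, 0 < ε₀ → ∃ ε : ℝ, 0 < ε ∧ ε < ε₀ ∧ N0 f ε < ENNReal.ofReal (C / ε) := by
  intro ε₀ hε₀
  by_contra! hcon
  have h1 : ∀ y ∈ Set.Ioo 0 ε₀, ENNReal.ofReal (C / y) ≤
      Filter.liminf (fun n => gsum f n y) Filter.atTop := by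
    intro y hy
    refine (hcon y hy.1 hy.2).trans (le_trans ?_ (fiber_le f y))
    unfold N0
    refine (iInf₂_le (fun x => f x - y) (hf.sub continuousOn_const)).trans ?_
    refine (iInf_le _ ?_).trans ?_
    · intro x _
      simp [abs_of_pos hy.1]
    · simp [sub_eq_zero]
  have h2 : ∫⁻ y in Set.Ioo 0 ε₀, ENNReal.ofReal (C / y) ≤ 2 := by
    calc _ ≤ ∫⁻ y in Set.Ioo 0 ε₀, Filter.liminf (fun n => gsum f n y) Filter.atTop :=
          setLIntegral_mono' measurableSet_Ioo h1
      _ ≤ ∫⁻ y, Filter.liminf (fun n => gsum f n y) Filter.atTop := setLIntegral_le_lintegral _ _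
      _ ≤ Filter.liminf (fun n => ∫⁻ y, gsum f n y) Filter.atTop :=
          lintegral_liminf_le (gsum_meas f hf)
      _ ≤ Filter.liminf (fun _ : ℕ => (2 : ℝ≥0∞)) Filter.atTop :=
          Filter.liminf_le_liminf (Filter.Eventually.of_forall (gsum_int f hf hlip))
      _ = 2 := by simp
  have h3 : IntegrableOn (fun y : ℝ => C / y) (Set.Ioo 0 ε₀) := by
    refine (lintegral_ofReal_ne_top_iff_integrable ?_ ?_).1 (ne_top_of_le_ne_top (by simp) h2)
    · exact (measurable_const.div measurable_id).aestronglyMeasurable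
    · filter_upwards [ae_restrict_mem measurableSet_Ioo] with y hy
      exact div_nonneg hC0.le hy.1.le
  have h4 : IntegrableOn (fun y : ℝ => y ^ (-1 : ℝ)) (Set.Ioo 0 ε₀) := by
    refine IntegrableOn.congr_fun (f := fun y => C⁻¹ * (C / y)) (h3.const_mul C⁻¹) (fun y hy => ?_) measurableSet_Ioo
    simp only [Real.rpow_neg_one]
    field_simp
  rw [intervalIntegral.integrableOn_Ioo_rpow_iff hε₀] at h4
  linarith
end
end
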